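/- Let (T,f) be the Hubbard tree with *-periodic kneading sequence ν, and let z be a periodic point of period m whose orbit does not contain c₀; if z is not a branch point, assume that the itinerary of z also has period m. If the first m−1 entries of the itinerary of z agree with the first m−1 entries of ν, then z is characteristic. Conversely, if z is a characteristic branch point, then the first m entries of its itinerary agree with the first m entries of ν. -/

import Mathlib

/- Common definitions for formalizing "Admissibility of kneading sequences and
structure of Hubbard trees for quadratic polynomials" by Bruin–Schleicher. -/

namespace HubbardTrees

/-- The symbols `0`, `1`, `*` used for itineraries and kneading sequences. -/
inductive Sym : Type
  | zero : Sym
  | one : Sym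
  | star : Sym
deriving DecidableEq

/-- `A` is an arc in `X` joining `x` and `y` (a point if `x = y`, otherwise a
homeomorphic image of `[0,1]` with endpoints `x` and `y`). -/
def IsArcBetween {X : Type*} [TopologicalSpace X] (A : Set X) (x y : X) : Prop :=
  (x = y ∧ A = {x}) ∨
  (x ≠ y ∧ ∃ γ : Path x y, Topology.IsEmbedding ⇑γ ∧ Set.range ⇑γ = A)

/-- The global arms at `x`: the connected components of `X \ {x}`. -/
def arms {X : Type*} [TopologicalSpace X] (x : X) : Set (Set X) :=
  {C | ∃ y, y ≠ x ∧ C = connectedComponentIn {x}ᶜ y}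

/-- The global arm at `x` containing `y` (for `y ≠ x`): the component of `X \ {x}`
containing `y`.  Local arms at `x` being germs of global arms, we represent the local
arm at `x` pointing towards `y` by this set. -/
def armTo {X : Type*} [TopologicalSpace X] (x y : X) : Set X :=
  connectedComponentIn {x}ᶜ y

/-- `x` is an endpoint: it has exactly one arm. -/
def IsEndpoint {X : Type*} [TopologicalSpace X] (x : X) : Prop :=
  (arms x).ncard = 1

/-- `x` is a branch point: it has at least three arms. -/
def IsBranchPt {X : Type*} [TopologicalSpace X] (x : X) : Prop :=
  3 ≤ (arms x).ncard

/-- `f` maps the set `A` homeomorphically onto its image. -/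
def MapsHomeoOn {X : Type*} [TopologicalSpace X] (f : X → X) (A : Set X) : Prop :=
  Topology.IsEmbedding (A.restrict f)

/-- `f` is a local homeomorphism onto its image at `x`. -/
def IsLocalHomeoAt {X : Type*} [TopologicalSpace X] (f : X → X) (x : X) : Prop :=
  ∃ U : Set X, IsOpen U ∧ x ∈ U ∧ Topology.IsEmbedding (U.restrict f)

/-- `g` sends the local arm at `x` represented by the global arm `C` to the local
arm at `g x` represented by `C'` (germ condition: some initial piece of `C` at `x`
is mapped into `C'`). -/
def MapsLocalArm {X : Type*} [TopologicalSpace X] (g : X → X) (x : X) (C C' : Set X) : Prop :=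
  C ∈ arms x ∧ C' ∈ arms (g x) ∧ ∃ U ∈ nhds x, g '' (C ∩ U) ⊆ C'

/-- `z` is periodic under `f` with exact period `n`. -/
def ExactPeriod {Y : Type*} (f : Y → Y) (z : Y) (n : ℕ) : Prop :=
  1 ≤ n ∧ f^[n] z = z ∧ ∀ k, 1 ≤ k → k < n → f^[k] z ≠ z

/-- The first return map `f^[n]` of the fixed point `z` of `f^[n]` permutes all the
local arms at `z` transitively in a single cycle. -/
def ArmsTransitive {X : Type*} [TopologicalSpace X] (f : X → X) (n : ℕ) (z : X) : Prop :=
  ∀ C ∈ arms z, ∀ C' ∈ arms z, ∃ j : ℕ, MapsLocalArm (f^[n * j]) z C C'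

/-- An (abstract) Hubbard tree: a finite topological tree `X` together with a
continuous surjection `f` and a critical point `c0`, subject to the axioms of
Bruin–Schleicher. -/
structure HubbardTree (X : Type*) [TopologicalSpace X] : Type _ where
  /-- the dynamics -/
  f : X → X
  /-- the critical point -/
  c0 : X
  compact : CompactSpace X
  t2 : T2Space X
  conn : ConnectedSpace X
  /-- the unique arc `[x,y]` joining two points -/
  arc : X → X → Set X
  arc_isArc : ∀ x y : X, IsArcBetween (arc x y) x y
  arc_unique : ∀ (x y : X) (A : Set X), IsArcBetween A x y → A = arc x y
  -- finiteness of the tree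
  arms_finite : ∀ x : X, (arms x).Finite
  branch_finite : Set.Finite {x : X | IsBranchPt x}
  endpoint_finite : Set.Finite {x : X | IsEndpoint x}
  cont : Continuous f
  surj : Function.Surjective f
  /-- every point has at most two inverse images -/
  two_preimages : ∀ y : X, ∃ a b : X, f ⁻¹' {y} ⊆ {a, b}
  /-- local homeomorphism onto its image away from the critical point -/
  local_homeo : ∀ x : X, x ≠ c0 → IsLocalHomeoAt f x
  /-- all endpoints lie on the critical orbit -/
  endpoints_on_orbit : ∀ x : X, IsEndpoint x → ∃ k : ℕ, f^[k] c0 = x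
  /-- the critical point is periodic or preperiodic -/
  crit_preperiodic : ∃ k n : ℕ, 1 ≤ n ∧ f^[k + n] c0 = f^[k] c0
  /-- the critical point is not fixed -/
  crit_not_fixed : f c0 ≠ c0
  /-- expansivity -/
  expansive : ∀ x y : X, x ≠ y →
    (IsBranchPt x ∨ ∃ k : ℕ, f^[k] c0 = x) →
    (IsBranchPt y ∨ ∃ k : ℕ, f^[k] c0 = y) →
    ∃ n : ℕ, c0 ∈ f^[n] '' (arc x y)

namespace HubbardTree

variable {X : Type*} [TopologicalSpace X] (H : HubbardTree X)

/-- The critical value `c₁ = f(c₀)`. -/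
def c1 : X := H.f H.c0

/-- The component `T₁` of `T \ {c₀}` containing the critical value. -/
def T1 : Set X := connectedComponentIn {H.c0}ᶜ H.c1

open Classical in
/-- The symbol (`0`, `1` or `*`) attached to a point of the tree. -/
noncomputable def symOf (x : X) : Sym :=
  if x = H.c0 then Sym.star else if x ∈ H.T1 then Sym.one else Sym.zero

/-- The itinerary of `x`: a sequence of symbols, 1-indexed (the value at index `0`
is irrelevant); entry `k ≥ 1` is the symbol of `f^[k-1] x`. -/
noncomputable def itin (x : X) : ℕ → Sym :=
  fun k => H.symOf (H.f^[k - 1] x)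

/-- The kneading sequence: the itinerary of the critical value (1-indexed). -/
noncomputable def kneading : ℕ → Sym := H.itin H.c1

/-- `z` is the characteristic point of its periodic orbit: `c₁` lies in one
component of `X \ {z}` while `c₀` and all other points of the orbit lie in a
different component. -/
def IsCharacteristic (z : X) : Prop :=
  ∃ Cv Cz : Set X, Cv ∈ arms z ∧ Cz ∈ arms z ∧ Cv ≠ Cz ∧
    H.c1 ∈ Cv ∧ H.c0 ∈ Cz ∧ ∀ k : ℕ, H.f^[k] z ≠ z → H.f^[k] z ∈ Cz

/-- The first return map fixes the local arm at `z` pointing to the critical point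
and permutes all other local arms transitively in a single cycle. -/
def OtherArmsTransitive (n : ℕ) (z : X) : Prop :=
  ∀ C ∈ arms z, C ≠ armTo z H.c0 → ∀ C' ∈ arms z, C' ≠ armTo z H.c0 →
    ∃ j : ℕ, MapsLocalArm (H.f^[n * j]) z C C'

/-- `z` is the characteristic point of an evil periodic orbit of branch points of
exact period `n`. -/
def IsEvilOrbit (z : X) (n : ℕ) : Prop :=
  ExactPeriod H.f z n ∧ (∀ k : ℕ, IsBranchPt (H.f^[k] z)) ∧
    H.IsCharacteristic z ∧ ¬ ArmsTransitive H.f n z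

/-- `x` is precritical with `Step(x) = k`: `k ≥ 1` is minimal with `f^[k] x = c₁`. -/
def Step (x : X) (k : ℕ) : Prop :=
  1 ≤ k ∧ H.f^[k] x = H.c1 ∧ ∀ j, 1 ≤ j → j < k → H.f^[j] x ≠ H.c1

/-- `x` is the closest precritical point `ζ_k`. -/
def IsClosestPrecritical (x : X) (k : ℕ) : Prop :=
  H.Step x k ∧ ∀ j, 1 ≤ j → j < k → H.c1 ∉ H.f^[j] '' (H.arc H.c1 x)

/-- `x` is the earliest precritical point on the set `A`, with `Step(x) = k`:
it is a precritical point on `A` of minimal Step. -/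
def IsEarliestPrecriticalOn (A : Set X) (x : X) (k : ℕ) : Prop :=
  x ∈ A ∧ H.Step x k ∧ ∀ y ∈ A, ∀ j : ℕ, H.Step y j → k ≤ j

/-- Marked points: branch points and points of the critical orbit. -/
def MarkedPt (x : X) : Prop :=
  IsBranchPt x ∨ ∃ k : ℕ, H.f^[k] H.c0 = x

/-- Two marked points are joined by an edge if the arc between them contains no
further marked point. -/
def IsEdge (x y : X) : Prop :=
  H.MarkedPt x ∧ H.MarkedPt y ∧ x ≠ y ∧
    ∀ w ∈ H.arc x y, H.MarkedPt w → w = x ∨ w = y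

/-- Equivalence of Hubbard trees: a bijection between the marked points which
conjugates the dynamics and preserves edges. -/
def Equivalent {Y : Type*} [TopologicalSpace Y] (H' : HubbardTree Y) : Prop :=
  ∃ φ : X → Y,
    (∀ x : X, H.MarkedPt x → H'.MarkedPt (φ x)) ∧
    (∀ x x' : X, H.MarkedPt x → H.MarkedPt x' → φ x = φ x' → x = x') ∧
    (∀ y : Y, H'.MarkedPt y → ∃ x : X, H.MarkedPt x ∧ φ x = y) ∧
    φ H.c0 = H'.c0 ∧
    (∀ x : X, H.MarkedPt x → φ (H.f x) = H'.f (φ x)) ∧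
    (∀ x x' : X, H.MarkedPt x → H.MarkedPt x' →
      (H.IsEdge x x' ↔ H'.IsEdge (φ x) (φ x')))

end HubbardTree

/-! ### Combinatorics of kneading sequences -/

/-- The function `ρ_ν(n) = inf { k > n : ν_k ≠ ν_{k-n} } ∈ ℕ ∪ {∞}` (sequences are
1-indexed). -/
noncomputable def rho (ν : ℕ → Sym) (n : ℕ) : ℕ∞ :=
  sInf {e : ℕ∞ | ∃ j : ℕ, e = (j : ℕ∞) ∧ n < j ∧ ν j ≠ ν (j - n)}

/-- `RhoOrbit ν k m` means that `m` belongs to the `ρ`-orbit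
`k → ρ(k) → ρ(ρ(k)) → ⋯` of `k` (stopped before reaching `∞`). -/
inductive RhoOrbit (ν : ℕ → Sym) : ℕ → ℕ → Prop
  | refl (k : ℕ) : RhoOrbit ν k k
  | step {k m j : ℕ} : RhoOrbit ν k m → rho ν m = (j : ℕ∞) → RhoOrbit ν k j

/-- `m` occurs in the internal address `1 → ρ(1) → ρ(ρ(1)) → ⋯` of `ν`. -/
def InternalAddress (ν : ℕ → Sym) (m : ℕ) : Prop := RhoOrbit ν 1 m

/-- `ν` is a `*`-periodic kneading sequence of (exact) period `n`:
`ν = overline(1 ν₂ … ν_{n-1} *)`. -/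
def StarPeriodic (ν : ℕ → Sym) (n : ℕ) : Prop :=
  2 ≤ n ∧ ν 1 = Sym.one ∧ ν n = Sym.star ∧
    (∀ k, 1 ≤ k → ν (k + n) = ν k) ∧
    (∀ k, 1 ≤ k → k < n → ν k ≠ Sym.star)

/-- `ν` fails the admissibility condition for period `m`. -/
def FailsAdmissibility (ν : ℕ → Sym) (m : ℕ) : Prop :=
  1 ≤ m ∧
  ¬ InternalAddress ν m ∧
  (∀ k : ℕ, k ∣ m → 1 ≤ k → k < m → rho ν k ≤ (m : ℕ∞)) ∧
  ∃ R r : ℕ, rho ν m = (R : ℕ∞) ∧ 1 ≤ r ∧ r ≤ m ∧ r ≡ R [MOD m] ∧ RhoOrbit ν r m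

open Classical in
/-- The number `q(m)` of arms predicted by the kneading sequence, where
`ρ(m) = R < ∞` and `r ∈ {1,…,m}` is congruent to `R` modulo `m`. -/
noncomputable def qArms (ν : ℕ → Sym) (m R r : ℕ) : ℕ :=
  if RhoOrbit ν r m then (R - r) / m + 1 else (R - r) / m + 2


/-! ### Embeddings into the plane and cyclic order of arms -/

/-- Three points in the plane are in (strictly) counterclockwise position. -/
def Ccw (p q r : ℝ × ℝ) : Prop :=
  0 < (q.1 - p.1) * (r.2 - p.2) - (q.2 - p.2) * (r.1 - p.1)

namespace HubbardTree

variable {X : Type*} [TopologicalSpace X] (H : HubbardTree X)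

/-- Under an embedding `φ` of the tree into the plane, `p` is a first exit point of
the arm `C` at `x` through the circle of radius `ε` around `φ x`: `p = φ y` for a
point `y ∈ C` at distance exactly `ε`, such that the arc from `x` to `y` stays
within distance `< ε` before reaching `y`. -/
def ExitPt (φ : X → ℝ × ℝ) (x : X) (C : Set X) (ε : ℝ) (p : ℝ × ℝ) : Prop :=
  ∃ y ∈ C, φ y = p ∧ dist (φ x) p = ε ∧
    ∀ z ∈ H.arc x y, z ≠ y → dist (φ x) (φ z) < ε

/-- The local arms at `x` represented by the arms `C, C', C''` are in
counterclockwise cyclic order under the embedding `φ`. -/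
def ArmsCcw (φ : X → ℝ × ℝ) (x : X) (C C' C'' : Set X) : Prop :=
  ∃ ε₀ : ℝ, 0 < ε₀ ∧ ∀ ε : ℝ, 0 < ε → ε < ε₀ →
    ∀ p p' p'' : ℝ × ℝ, H.ExitPt φ x C ε p → H.ExitPt φ x C' ε p' →
      H.ExitPt φ x C'' ε p'' → Ccw p p' p''

/-- `f` respects the cyclic order (induced by the embedding `φ`) of the local arms
at all branch points. -/
def RespectsCyclicOrder (φ : X → ℝ × ℝ) : Prop :=
  ∀ x : X, IsBranchPt x →
    ∀ C C' C'' : Set X, C ∈ arms x → C' ∈ arms x → C'' ∈ arms x →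
      C ≠ C' → C' ≠ C'' → C ≠ C'' → H.ArmsCcw φ x C C' C'' →
      ∀ D D' D'' : Set X, MapsLocalArm H.f x C D → MapsLocalArm H.f x C' D' →
        MapsLocalArm H.f x C'' D'' → H.ArmsCcw φ (H.f x) D D' D''

/-- The Hubbard tree can be topologically embedded into the plane `ℝ²` so that `f`
respects the cyclic order of the local arms at all branch points. -/
def PlanarEmbeddable : Prop :=
  ∃ φ : X → ℝ × ℝ, Topology.IsEmbedding φ ∧ H.RespectsCyclicOrder φ

end HubbardTree


section topo
open Set Topology

theorem aux_conn_union {X : Type*} [TopologicalSpace X] [PreconnectedSpace X]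
    {V : Set X} {y : X} (hV : IsOpen V) (hc : IsClosed (V ∪ {y})) (hy : y ∉ V) :
    IsPreconnected (V ∪ {y}) := by
  have key : ∀ u v : Set X, IsClosed u → IsClosed v → V ∪ {y} ⊆ u ∪ v → Disjoint u v →
      y ∈ u → V ∪ {y} ⊆ u := by
    intro u v hu hv hs hd hyu
    have hW1 : V ∩ uᶜ = (V ∪ {y}) ∩ v := by
      ext x
      constructor
      · rintro ⟨h1, h2⟩
        rcases hs (Or.inl h1) with h | h
        · exact absurd h h2
        · exact ⟨Or.inl h1, h⟩
      · rintro ⟨h1, h2⟩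
        have hxu : x ∉ u := fun h => (Set.disjoint_left.1 hd h) h2
        rcases h1 with h1 | h1
        · exact ⟨h1, hxu⟩
        · rw [Set.mem_singleton_iff] at h1
          exact absurd (h1 ▸ hyu) hxu
    have hclopen : IsClopen (V ∩ uᶜ) :=
      ⟨hW1 ▸ hc.inter hv, hV.inter hu.isOpen_compl⟩
    rcases isClopen_iff.1 hclopen with h | h
    · rintro x (hx | hx)
      · by_contra hxu
        have : x ∈ V ∩ uᶜ := ⟨hx, hxu⟩
        rw [h] at this
        exact this
      · rw [Set.mem_singleton_iff] at hx
        exact hx ▸ hyu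
    · have : y ∈ V ∩ uᶜ := h ▸ Set.mem_univ y
      exact absurd this.1 hy
  rw [isPreconnected_iff_subset_of_fully_disjoint_closed hc]
  intro u v hu hv hs hd
  rcases hs (Or.inr rfl) with h | h
  · exact Or.inl (key u v hu hv hs hd h)
  · exact Or.inr (key v u hv hu (by rwa [Set.union_comm v u]) hd.symm h)

theorem noncut_type {K : Type*} [TopologicalSpace K] [CompactSpace K] [T2Space K]
    [PreconnectedSpace K] (p : K) (hne : ∃ q : K, q ≠ p) :
    ∃ q : K, q ≠ p ∧ IsPreconnected ({q}ᶜ : Set K) := by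
  by_contra hcon
  push Not at hcon
  have hsep : ∀ y : K, y ≠ p → ∃ U V : Set K, IsOpen U ∧ IsOpen V ∧ Disjoint U V ∧
      U ∪ V = {y}ᶜ ∧ p ∈ V ∧ U.Nonempty := by
    intro y hy
    have h := hcon y hy
    unfold IsPreconnected at h
    push Not at h
    obtain ⟨u, v, hu, hv, hs, ⟨a, ha⟩, ⟨b, hb⟩, hd⟩ := h
    have hyo : IsOpen ({y}ᶜ : Set K) := isOpen_compl_singleton
    have hd' : Disjoint ({y}ᶜ ∩ u) ({y}ᶜ ∩ v) := by
      rw [Set.disjoint_left]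
      intro x hx1 hx2
      have : x ∈ ({y}ᶜ ∩ (u ∩ v) : Set K) := ⟨hx1.1, hx1.2, hx2.2⟩
      rw [hd] at this
      exact this
    have hun : ({y}ᶜ ∩ u) ∪ ({y}ᶜ ∩ v) = ({y}ᶜ : Set K) := by
      rw [← Set.inter_union_distrib_left]
      exact Set.inter_eq_left.2 hs
    have hp : p ∈ ({y}ᶜ : Set K) := fun h => hy (Set.mem_singleton_iff.1 h).symm
    rcases hs hp with hpu | hpv
    · exact ⟨_, _, hyo.inter hv, hyo.inter hu, hd'.symm, by rw [Set.union_comm, hun],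
        ⟨hp, hpu⟩, ⟨b, hb⟩⟩
    · exact ⟨_, _, hyo.inter hu, hyo.inter hv, hd', hun, ⟨hp, hpv⟩, ⟨a, ha⟩⟩
  choose! U V hU hV hd hun hpV hne' using hsep
  have hyU : ∀ y, y ≠ p → y ∉ U y := fun y hy h => by
    have : y ∈ ({y}ᶜ : Set K) := by rw [← hun y hy]; exact Or.inl h
    exact this rfl
  have hyV : ∀ y, y ≠ p → y ∉ V y := fun y hy h => by
    have : y ∈ ({y}ᶜ : Set K) := by rw [← hun y hy]; exact Or.inr h
    exact this rfl
  have hcompl : ∀ y, y ≠ p → V y ∪ {y} = (U y)ᶜ := by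
    intro y hy
    ext x
    constructor
    · rintro (h | h) hx
      · exact Set.disjoint_left.1 (hd y hy) hx h
      · rw [Set.mem_singleton_iff] at h
        subst h
        exact hyU x hy hx
    · intro hx
      by_cases hxy : x = y
      · exact Or.inr hxy
      · have : x ∈ U y ∪ V y := by rw [hun y hy]; exact hxy
        rcases this with h | h
        · exact absurd h hx
        · exact Or.inl h
  have hcompl2 : ∀ y, y ≠ p → U y ∪ {y} = (V y)ᶜ := by
    intro y hy
    ext x
    constructor
    · rintro (h | h) hx
      · exact Set.disjoint_left.1 (hd y hy) h hx
      · rw [Set.mem_singleton_iff] at h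
        subst h
        exact hyV x hy hx
    · intro hx
      by_cases hxy : x = y
      · exact Or.inr hxy
      · have : x ∈ U y ∪ V y := by rw [hun y hy]; exact hxy
        rcases this with h | h
        · exact Or.inl h
        · exact absurd h hx
  have hUp : ∀ y, y ≠ p → ∀ z ∈ U y, z ≠ p := fun y hy z hz h =>
    Set.disjoint_left.1 (hd y hy) hz (h ▸ hpV y hy)
  have hnest : ∀ y, y ≠ p → ∀ z ∈ U y, U z ∪ {z} ⊆ U y := by
    intro y hy z hz
    have hzp := hUp y hy z hz
    have hconn : IsPreconnected (V y ∪ {y}) :=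
      aux_conn_union (hV y hy) (by rw [hcompl y hy]; exact (hU y hy).isClosed_compl) (hyV y hy)
    rw [hcompl y hy] at hconn
    have hsub : (U y)ᶜ ⊆ V z := by
      refine hconn.subset_right_of_subset_union (hU z hzp) (hV z hzp) (hd z hzp) ?_ ?_
      · rw [hun z hzp]
        intro x hx hxz
        rw [Set.mem_singleton_iff] at hxz
        exact hx (hxz ▸ hz)
      · exact ⟨p, fun h => hUp y hy p h rfl, hpV z hzp⟩
    rintro x (hx | hx)
    · by_contra hxy
      exact Set.disjoint_left.1 (hd z hzp) hx (hsub hxy)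
    · rw [Set.mem_singleton_iff] at hx
      exact hx ▸ hz
  obtain ⟨q0, hq0⟩ := hne
  obtain ⟨M, hM⟩ := zorn_superset {C : Set K | ∃ y, y ≠ p ∧ C = U y ∪ {y}} (by
    intro c hcS hchain
    by_cases hcne : c.Nonempty
    · have hint : (⋂₀ c).Nonempty := by
        refine IsCompact.nonempty_sInter_of_directed_nonempty_isCompact_isClosed (S := c) (hS := hcne.to_subtype) ?_ ?_ ?_ ?_
        · intro C hC D hD
          rcases hchain.total hC hD with h | h
          · exact ⟨C, hC, subset_rfl, h⟩
          · exact ⟨D, hD, h, subset_rfl⟩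
        · intro C hC
          obtain ⟨y, hy, rfl⟩ := hcS hC
          exact ⟨y, Or.inr rfl⟩
        · intro C hC
          obtain ⟨y, hy, rfl⟩ := hcS hC
          rw [hcompl2 y hy]
          exact (hV y hy).isClosed_compl.isCompact
        · intro C hC
          obtain ⟨y, hy, rfl⟩ := hcS hC
          rw [hcompl2 y hy]
          exact (hV y hy).isClosed_compl
      obtain ⟨r, hr⟩ := hint
      have hrp : r ≠ p := by
        obtain ⟨C, hC⟩ := hcne
        obtain ⟨y, hy, rfl⟩ := hcS hC
        rcases hr _ hC with h | h
        · exact hUp y hy r h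
        · rw [Set.mem_singleton_iff] at h
          exact h ▸ hy
      refine ⟨_, ⟨r, hrp, rfl⟩, ?_⟩
      intro C hC
      obtain ⟨y, hy, rfl⟩ := hcS hC
      rcases hr _ hC with h | h
      · exact (hnest y hy r h).trans Set.subset_union_left
      · rw [Set.mem_singleton_iff] at h
        rw [h]
    · rw [Set.not_nonempty_iff_eq_empty] at hcne
      subst hcne
      exact ⟨_, ⟨q0, hq0, rfl⟩, by simp⟩)
  obtain ⟨⟨y, hy, rfl⟩, hmin⟩ := hM
  obtain ⟨z, hz⟩ := hne' y hy
  have h1 := hnest y hy z hz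
  have h2 := hmin ⟨z, hUp y hy z hz, rfl⟩ (h1.trans Set.subset_union_left)
  exact hyU y hy (h1 (h2 (Or.inr rfl)))

theorem noncut_set {X : Type*} [TopologicalSpace X] [T2Space X] {K : Set X}
    (hK : IsCompact K) (hc : IsPreconnected K) {p : X} (hp : p ∈ K) (hne : ∃ q ∈ K, q ≠ p) :
    ∃ q ∈ K, q ≠ p ∧ IsPreconnected (K \ {q}) := by
  have : CompactSpace K := isCompact_iff_compactSpace.1 hK
  have : PreconnectedSpace K := Subtype.preconnectedSpace hc
  obtain ⟨q, hq, hqp⟩ := hne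
  obtain ⟨r, hr, hrc⟩ := noncut_type (⟨p, hp⟩ : K) ⟨⟨q, hq⟩, fun h => hqp (congrArg Subtype.val h)⟩
  refine ⟨r, r.2, fun h => hr (Subtype.ext h), ?_⟩
  have := hrc.image Subtype.val continuous_subtype_val.continuousOn
  convert this using 1
  ext x
  constructor
  · rintro ⟨h1, h2⟩
    exact ⟨⟨x, h1⟩, fun h => h2 (congrArg Subtype.val h), rfl⟩
  · rintro ⟨⟨x, h1⟩, h2, rfl⟩
    exact ⟨h1, fun h => h2 (Subtype.ext h)⟩

theorem arm_mem {X : Type*} [TopologicalSpace X] {x y : X} (h : y ≠ x) : y ∈ armTo x y :=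
  mem_connectedComponentIn h

theorem arm_closed {X : Type*} [TopologicalSpace X] [T1Space X] {p : X} {C : Set X}
    (hC : C ∈ arms p) : IsClosed (C ∪ {p}) := by
  obtain ⟨y, hy, rfl⟩ := hC
  have h : closure (connectedComponentIn {p}ᶜ y) ⊆ connectedComponentIn {p}ᶜ y ∪ {p} := by
    intro x hx
    by_cases hxp : x = p
    · exact Or.inr hxp
    · left
      have hpre : IsPreconnected (closure (connectedComponentIn {p}ᶜ y) ∩ {p}ᶜ) :=
        isPreconnected_connectedComponentIn.subset_closure
          (fun w hw => ⟨subset_closure hw, connectedComponentIn_subset _ _ hw⟩)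
          Set.inter_subset_left
      exact hpre.subset_connectedComponentIn
        ⟨subset_closure (mem_connectedComponentIn hy), hy⟩ Set.inter_subset_right ⟨hx, hxp⟩
  rw [← closure_subset_iff_isClosed, closure_union, isClosed_singleton.closure_eq]
  exact Set.union_subset h Set.subset_union_right

theorem arm_open {X : Type*} [TopologicalSpace X] [T1Space X] {p : X} (hfin : (arms p).Finite)
    {C : Set X} (hC : C ∈ arms p) : IsOpen C := by
  have hcl : IsClosed ({p} ∪ ⋃ D ∈ arms p \ {C}, (D ∪ {p})) :=
    isClosed_singleton.union
      ((hfin.subset Set.sdiff_subset).isClosed_biUnion (fun D hD => arm_closed hD.1))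
  have : C = ({p} ∪ ⋃ D ∈ arms p \ {C}, (D ∪ {p}))ᶜ := by
    obtain ⟨y, hy, hCe⟩ := hC
    ext x
    simp only [Set.mem_compl_iff, Set.mem_union, Set.mem_iUnion, Set.mem_singleton_iff, not_or,
      not_exists, Set.mem_sdiff, exists_prop, not_and]
    constructor
    · intro hx
      have hxp : x ≠ p := by
        rw [hCe] at hx
        exact connectedComponentIn_subset _ _ hx
      refine ⟨hxp, ?_⟩
      rintro D ⟨⟨w, hw, rfl⟩, hD⟩
      refine ⟨fun hxD => hD ?_, hxp⟩
      rw [hCe] at hx ⊢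
      rw [connectedComponentIn_eq hx, connectedComponentIn_eq hxD]
    · rintro ⟨hxp, hx⟩
      by_contra hxC
      have hxm : x ∈ connectedComponentIn {p}ᶜ x := mem_connectedComponentIn hxp
      exact (hx (connectedComponentIn {p}ᶜ x) ⟨⟨x, hxp, rfl⟩, fun h => hxC (h ▸ hxm)⟩).1 hxm
  rw [this]
  exact hcl.isOpen_compl

theorem arm_endpoint {X : Type*} [TopologicalSpace X] [CompactSpace X] [T2Space X]
    [PreconnectedSpace X] {p : X} (hfin : (arms p).Finite)
    {C : Set X} (hC : C ∈ arms p) : ∃ e ∈ C, IsEndpoint e := by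
  have ho := arm_open hfin hC
  have hcl := arm_closed hC
  have hpC : p ∉ C := by
    obtain ⟨y, hy, rfl⟩ := hC
    exact fun h => connectedComponentIn_subset _ _ h rfl
  have hc1 := aux_conn_union ho hcl hpC
  have hCc : (C ∪ {p})ᶜ ∪ {p} = Cᶜ := by
    ext x
    by_cases hx : x = p
    · subst hx; simp [hpC]
    · simp [hx]
  have hc2 : IsPreconnected Cᶜ := by
    rw [← hCc]
    refine aux_conn_union hcl.isOpen_compl ?_ (fun h => h (Or.inr rfl))
    rw [hCc]
    exact ho.isClosed_compl
  have hne : ∃ q ∈ C, q ≠ p := by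
    obtain ⟨y, hy, rfl⟩ := hC
    exact ⟨y, mem_connectedComponentIn hy, hy⟩
  obtain ⟨q0, hq0, hq0p⟩ := hne
  obtain ⟨q, hq, hqp, hqc⟩ := noncut_set hcl.isCompact hc1 (Or.inr rfl : p ∈ C ∪ {p})
    ⟨q0, Or.inl hq0, hq0p⟩
  have hqC : q ∈ C := by
    rcases hq with h | h
    · exact h
    · exact absurd h hqp
  refine ⟨q, hqC, ?_⟩
  have hfull : IsPreconnected ({q}ᶜ : Set X) := by
    have : ({q}ᶜ : Set X) = ((C ∪ {p}) \ {q}) ∪ Cᶜ := by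
      ext x
      by_cases hx : x ∈ C
      · simp [hx]
      · have : x ≠ q := fun h => hx (h ▸ hqC)
        simp [hx, this]
    rw [this]
    exact IsPreconnected.union p ⟨Or.inr rfl, fun h => hqp (Set.mem_singleton_iff.1 h).symm⟩ hpC hqc hc2
  unfold IsEndpoint
  rw [Set.ncard_eq_one]
  refine ⟨{q}ᶜ, ?_⟩
  ext D
  constructor
  · rintro ⟨y, hy, rfl⟩
    exact hfull.connectedComponentIn hy
  · intro hD
    rw [Set.mem_singleton_iff] at hD
    exact ⟨p, fun h => hqp h.symm, by rw [hD, hfull.connectedComponentIn (fun h => hqp (Set.mem_singleton_iff.1 h).symm)]⟩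

end topo
namespace HubbardTree
open Set Topology

theorem arc_of_inj {X : Type*} [TopologicalSpace X] (H : HubbardTree X) (g : ℝ → X) {s t : ℝ}
    (hst : s ≤ t) (hg : ContinuousOn g (Icc s t)) (hi : InjOn g (Icc s t)) :
    H.arc (g s) (g t) = g '' Icc s t := by
  have := H.t2
  symm
  apply H.arc_unique
  rcases hst.eq_or_lt with h | h
  · subst h
    left
    simp
  · right
    refine ⟨fun he => h.ne (hi ⟨le_rfl, hst⟩ ⟨hst, le_rfl⟩ he), ?_⟩
    have hmem : ∀ u : unitInterval, s + u * (t - s) ∈ Icc s t := by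
      intro u
      have h0 := u.2.1
      have h1 := u.2.2
      constructor <;> nlinarith
    have hcont : Continuous (fun u : unitInterval => g (s + u * (t - s))) :=
      hg.comp_continuous (by fun_prop) hmem
    refine ⟨⟨⟨fun u => g (s + u * (t - s)), hcont⟩, by simp, by simp⟩, ?_, ?_⟩
    · refine (Continuous.isClosedEmbedding hcont ?_).isEmbedding
      intro u v huv
      have := hi (hmem u) (hmem v) huv
      have h2 : (u : ℝ) * (t - s) = v * (t - s) := by linarith
      exact Subtype.ext (mul_right_cancel₀ (sub_ne_zero.2 h.ne') h2)
    · ext x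
      constructor
      · rintro ⟨u, rfl⟩
        exact ⟨_, hmem u, rfl⟩
      · rintro ⟨r, hr, rfl⟩
        have hpos : 0 < t - s := sub_pos.2 h
        refine ⟨⟨(r - s) / (t - s), div_nonneg (by linarith [hr.1]) hpos.le,
          (div_le_one hpos).2 (by linarith [hr.2])⟩, ?_⟩
        change g (s + (r - s) / (t - s) * (t - s)) = g r
        rw [div_mul_cancel₀ _ hpos.ne']
        congr 1
        ring

theorem param {X : Type*} [TopologicalSpace X] (H : HubbardTree X) (a b : X) :
    ∃ T : ℝ, 0 ≤ T ∧ ∃ g : ℝ → X, Continuous g ∧ InjOn g (Icc 0 T) ∧ g 0 = a ∧ g T = b ∧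
      H.arc a b = g '' Icc 0 T := by
  rcases H.arc_isArc a b with ⟨h, hA⟩ | ⟨h, γ, hγ, hA⟩
  · subst h
    exact ⟨0, le_rfl, fun _ => a, continuous_const, by simp, rfl, rfl, by simp [hA]⟩
  · refine ⟨1, zero_le_one, γ.extend, γ.continuous_extend, ?_, by simp, by simp, ?_⟩
    · intro s hs t ht hst
      rw [Path.extend_apply _ hs, Path.extend_apply _ ht] at hst
      exact congrArg Subtype.val (hγ.injective hst)
    · rw [← hA]
      ext x
      constructor
      · rintro ⟨u, rfl⟩
        exact ⟨u, u.2, by simp⟩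
      · rintro ⟨u, hu, rfl⟩
        exact ⟨⟨u, hu⟩, by rw [Path.extend_apply _ hu]⟩

theorem arc_self {X : Type*} [TopologicalSpace X] (H : HubbardTree X) (a : X) :
    H.arc a a = {a} :=
  (H.arc_unique a a {a} (Or.inl ⟨rfl, rfl⟩)).symm

theorem left_mem {X : Type*} [TopologicalSpace X] (H : HubbardTree X) (a b : X) :
    a ∈ H.arc a b := by
  obtain ⟨T, hT, g, hg, hi, h0, h1, hA⟩ := H.param a b
  rw [hA]
  exact ⟨0, ⟨le_rfl, hT⟩, h0⟩

theorem right_mem {X : Type*} [TopologicalSpace X] (H : HubbardTree X) (a b : X) :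
    b ∈ H.arc a b := by
  obtain ⟨T, hT, g, hg, hi, h0, h1, hA⟩ := H.param a b
  rw [hA]
  exact ⟨T, ⟨hT, le_rfl⟩, h1⟩

theorem arc_comm {X : Type*} [TopologicalSpace X] (H : HubbardTree X) (a b : X) :
    H.arc a b = H.arc b a := by
  obtain ⟨T, hT, g, hg, hi, h0, h1, hA⟩ := H.param a b
  have h := H.arc_of_inj (fun t => g (T - t)) hT (by fun_prop) (by
    intro s hs t ht hst
    have := hi (show T - s ∈ Icc 0 T from ⟨by linarith [hs.2], by linarith [hs.1]⟩)
      (show T - t ∈ Icc 0 T from ⟨by linarith [ht.2], by linarith [ht.1]⟩) hst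
    linarith)
  simp only [sub_zero, sub_self, h0, h1] at h
  rw [h, hA]
  ext x
  constructor
  · rintro ⟨u, hu, rfl⟩
    exact ⟨T - u, ⟨by linarith [hu.2], by linarith [hu.1]⟩, by simp⟩
  · rintro ⟨u, hu, rfl⟩
    exact ⟨T - u, ⟨by linarith [hu.2], by linarith [hu.1]⟩, rfl⟩

theorem arc_compact {X : Type*} [TopologicalSpace X] (H : HubbardTree X) (a b : X) :
    IsCompact (H.arc a b) := by
  obtain ⟨T, hT, g, hg, hi, h0, h1, hA⟩ := H.param a b
  rw [hA]
  exact isCompact_Icc.image hg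

theorem arc_conn {X : Type*} [TopologicalSpace X] (H : HubbardTree X) (a b : X) :
    IsPreconnected (H.arc a b) := by
  obtain ⟨T, hT, g, hg, hi, h0, h1, hA⟩ := H.param a b
  rw [hA]
  exact isPreconnected_Icc.image g hg.continuousOn

/-- `x` before `y` on the arc from `a` to `b`. -/
theorem arc_sub {X : Type*} [TopologicalSpace X] (H : HubbardTree X) {a b x y : X}
    (hx : x ∈ H.arc a b) (hy : y ∈ H.arc a x) : y ∈ H.arc a b ∧ x ∈ H.arc y b := by
  obtain ⟨T, hT, g, hg, hi, h0, h1, hA⟩ := H.param a b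
  rw [hA] at hx
  obtain ⟨t, ht, rfl⟩ := hx
  have e1 := H.arc_of_inj g ht.1 hg.continuousOn (hi.mono (Icc_subset_Icc_right ht.2))
  rw [h0] at e1
  rw [e1] at hy
  obtain ⟨s, hs, rfl⟩ := hy
  refine ⟨?_, ?_⟩
  · rw [hA]
    exact ⟨s, ⟨hs.1, hs.2.trans ht.2⟩, rfl⟩
  · have e2 := H.arc_of_inj g (hs.2.trans ht.2) hg.continuousOn (hi.mono (Icc_subset_Icc_left hs.1))
    rw [h1] at e2
    rw [e2]
    exact ⟨t, ⟨hs.2, ht.2⟩, rfl⟩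

theorem arc_antisymm {X : Type*} [TopologicalSpace X] (H : HubbardTree X) {a x y : X}
    (hx : x ∈ H.arc a y) (hy : y ∈ H.arc a x) : x = y := by
  have := (H.arc_sub hx hy).2
  rw [H.arc_self] at this
  exact this

/-- concatenation -/
theorem arc_tri {X : Type*} [TopologicalSpace X] (H : HubbardTree X) {a b c x : X}
    (hx : x ∈ H.arc a c) : x ∈ H.arc a b ∨ x ∈ H.arc b c := by
  have := H.t2
  obtain ⟨T, hT, g, hg, hi, h0, h1, hA⟩ := H.param a b
  obtain ⟨S, hS, k, hk, ki, k0, k1, kA⟩ := H.param b c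
  have hcl : IsCompact (Icc 0 T ∩ g ⁻¹' H.arc b c) :=
    isCompact_Icc.inter_right ((H.arc_compact b c).isClosed.preimage hg)
  obtain ⟨t, ⟨ht, htm⟩, hmin⟩ := hcl.exists_isLeast
    ⟨T, ⟨hT, le_rfl⟩, by rw [mem_preimage, h1]; exact H.left_mem b c⟩
  rw [mem_preimage, kA] at htm
  obtain ⟨s, hs, hst⟩ := htm
  let h : ℝ → X := fun u => if u ≤ t then g u else k (u - t + s)
  have hc : Continuous h := by
    refine Continuous.if_le hg (by fun_prop) continuous_id continuous_const ?_
    intro u hu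
    have hu : u = t := hu
    rw [hu, sub_self, zero_add, hst]
  have hcross : ∀ u v : ℝ, 0 ≤ u → u ≤ t → t < v → v ≤ t + (S - s) → g u ≠ k (v - t + s) := by
    intro u v hu0 hut hv hvS he
    have hvm : v - t + s ∈ Icc 0 S := ⟨by linarith [hs.1], by linarith⟩
    have : t ≤ u := hmin ⟨⟨hu0, hut.trans ht.2⟩, by
      rw [mem_preimage, he, kA]; exact ⟨_, hvm, rfl⟩⟩
    have hue : u = t := le_antisymm hut this
    rw [hue, ← hst] at he
    have := ki hs hvm he
    linarith
  have hinj : InjOn h (Icc 0 (t + (S - s))) := by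
    intro u hu v hv huv
    by_cases h1 : u ≤ t <;> by_cases h2 : v ≤ t
    · simp only [h, h1, h2, if_true] at huv
      exact hi ⟨hu.1, h1.trans ht.2⟩ ⟨hv.1, h2.trans ht.2⟩ huv
    · simp only [h, h1, h2, if_true, if_false] at huv
      exact absurd huv (hcross u v hu.1 h1 (not_le.1 h2) hv.2)
    · simp only [h, h1, h2, if_true, if_false] at huv
      exact absurd huv.symm (hcross v u hv.1 h2 (not_le.1 h1) hu.2)
    · simp only [h, h1, h2, if_false] at huv
      push Not at h1 h2
      have := ki (show u - t + s ∈ Icc 0 S from ⟨by linarith [hs.1], by linarith [hu.2]⟩)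
        (show v - t + s ∈ Icc 0 S from ⟨by linarith [hs.1], by linarith [hv.2]⟩) huv
      linarith
  have e := H.arc_of_inj h (by linarith [ht.1, hs.2] : (0 : ℝ) ≤ t + (S - s)) hc.continuousOn hinj
  have e0 : h 0 = a := by simp only [h, ht.1, if_true, h0]
  have e1 : h (t + (S - s)) = c := by
    by_cases hle : t + (S - s) ≤ t
    · simp only [h, hle, if_true]
      have : S = s := le_antisymm (by linarith) hs.2
      rw [this, sub_self, add_zero, ← hst, ← this, k1]
    · simp only [h, hle, if_false]
      rw [← k1]
      congr 1
      ring
  rw [e0, e1] at e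
  rw [e] at hx
  obtain ⟨u, hu, rfl⟩ := hx
  by_cases h1 : u ≤ t
  · left
    rw [hA]
    exact ⟨u, ⟨hu.1, h1.trans ht.2⟩, by simp [h, h1]⟩
  · right
    rw [kA]
    exact ⟨u - t + s, ⟨by linarith [hs.1], by linarith [hu.2]⟩, by simp [h, h1]⟩

theorem arm_exists {X : Type*} [TopologicalSpace X] (H : HubbardTree X) {x r : X} (hr : r ≠ x)
    (hx : ¬ IsEndpoint x) : ∃ e, IsEndpoint e ∧ e ≠ x ∧ armTo x r ≠ armTo x e := by
  have := H.t2
  have := H.compact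
  have := H.conn
  have h1 : ∃ C ∈ arms x, C ≠ armTo x r := by
    by_contra hcon
    push Not at hcon
    apply hx
    unfold IsEndpoint
    rw [Set.ncard_eq_one]
    refine ⟨armTo x r, ?_⟩
    ext D
    constructor
    · exact hcon D
    · intro hD
      rw [mem_singleton_iff] at hD
      exact ⟨r, hr, hD⟩
  obtain ⟨C, hC, hne⟩ := h1
  obtain ⟨e, heC, he⟩ := arm_endpoint (H.arms_finite x) hC
  obtain ⟨y, hy, rfl⟩ := hC
  refine ⟨e, he, connectedComponentIn_subset _ _ heC, fun h => hne ?_⟩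
  rw [h]
  exact connectedComponentIn_eq heC

theorem arm_eq_of_not_mem {X : Type*} [TopologicalSpace X] (H : HubbardTree X) {x a b : X}
    (h : x ∉ H.arc a b) : armTo x a = armTo x b := by
  apply connectedComponentIn_eq
  exact IsPreconnected.subset_connectedComponentIn (F := {x}ᶜ) (H.arc_conn a b) (H.left_mem a b)
    (fun y hy hyx => by rw [mem_singleton_iff] at hyx; exact h (hyx ▸ hy)) (H.right_mem a b)

theorem cover {X : Type*} [TopologicalSpace X] (H : HubbardTree X) {x r : X} (hr : x ≠ r) :
    ∃ e, IsEndpoint e ∧ x ∈ H.arc r e := by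
  by_contra hcon
  push Not at hcon
  have hx : ¬ IsEndpoint x := fun h => hcon x h (H.right_mem r x)
  obtain ⟨e, he, hex, hne⟩ := H.arm_exists hr.symm hx
  exact hne (H.arm_eq_of_not_mem (hcon e he))

theorem arm_eq_iff {X : Type*} [TopologicalSpace X] (H : HubbardTree X) {x a b : X}
    (ha : a ≠ x) (hb : b ≠ x) : armTo x a = armTo x b ↔ x ∉ H.arc a b := by
  refine ⟨?_, H.arm_eq_of_not_mem⟩
  intro heq
  have := H.t2
  have hloc : ∀ y, y ≠ x → ∀ᶠ y' in 𝓝 y, y' ≠ x → x ∉ H.arc y y' := by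
    intro y hy
    have h1 : ∀ e ∈ {e : X | IsEndpoint e}, ∀ᶠ y' in 𝓝 y, y' ∈ H.arc x e → x ∉ H.arc y y' := by
      intro e _
      by_cases hye : y ∈ H.arc x e
      · obtain ⟨T, hT, g, hg, hi, h0, h1, hA⟩ := H.param x e
        rw [hA] at hye
        obtain ⟨s, hs, rfl⟩ := hye
        have hs0 : 0 < s := lt_of_le_of_ne hs.1 (fun h => hy (by rw [← h, h0]))
        have hcl : IsClosed (g '' Icc 0 (s / 2)) := (isCompact_Icc.image hg).isClosed
        have hnot : g s ∉ g '' Icc 0 (s / 2) := by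
          rintro ⟨u, hu, hus⟩
          have := hi ⟨hu.1, by linarith [hu.2, hs.2]⟩ hs hus
          linarith [hu.2]
        filter_upwards [hcl.isOpen_compl.mem_nhds hnot] with y' hy' hy'e
        rw [hA] at hy'e
        obtain ⟨s', hs', rfl⟩ := hy'e
        have hs'2 : s / 2 < s' := by
          by_contra hle
          exact hy' ⟨s', ⟨hs'.1, not_lt.1 hle⟩, rfl⟩
        have main : ∀ p q : ℝ, 0 < p → p ≤ q → q ≤ T → x ∉ H.arc (g p) (g q) := by
          intro p q hp hpq hq
          rw [H.arc_of_inj g hpq hg.continuousOn (hi.mono (Icc_subset_Icc hp.le hq))]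
          rintro ⟨u, hu, hux⟩
          rw [← h0] at hux
          have := hi ⟨by linarith [hu.1], hu.2.trans hq⟩ ⟨le_rfl, hT⟩ hux
          linarith [hu.1]
        rcases le_total s s' with hle | hle
        · exact main s s' hs0 hle hs'.2
        · rw [H.arc_comm]
          exact main s' s (by linarith) hle hs.2
      · filter_upwards [(H.arc_compact x e).isClosed.isOpen_compl.mem_nhds hye] with y' hy' h
        exact absurd h hy'
    have h2 := (Filter.eventually_all_finite H.endpoint_finite).2 h1
    filter_upwards [h2] with y' hy' hne
    obtain ⟨e, he, hm⟩ := H.cover hne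
    exact hy' e he hm
  have hxx : IsOpen ({x}ᶜ : Set X) := isOpen_compl_singleton
  have hS1 : IsOpen {y | y ≠ x ∧ x ∉ H.arc a y} := by
    rw [isOpen_iff_mem_nhds]
    rintro y ⟨hy, hay⟩
    filter_upwards [hloc y hy, hxx.mem_nhds hy] with y' h1 h2
    refine ⟨h2, fun h => ?_⟩
    rcases H.arc_tri (b := y) h with h | h
    · exact hay h
    · exact h1 h2 h
  have hS2 : IsOpen {y | y ≠ x ∧ x ∈ H.arc a y} := by
    rw [isOpen_iff_mem_nhds]
    rintro y ⟨hy, hay⟩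
    filter_upwards [hloc y hy, hxx.mem_nhds hy] with y' h1 h2
    refine ⟨h2, ?_⟩
    rcases H.arc_tri (b := y') hay with h | h
    · exact h
    · rw [H.arc_comm] at h
      exact absurd h (h1 h2)
  have hsub : armTo x a ⊆ {y | y ≠ x ∧ x ∉ H.arc a y} := by
    refine isPreconnected_connectedComponentIn.subset_left_of_subset_union hS1 hS2 ?_ ?_ ?_
    · rw [Set.disjoint_left]
      rintro y h1 h2
      exact h1.2 h2.2
    · intro y hy
      have hyx : y ≠ x := connectedComponentIn_subset _ _ hy
      by_cases h : x ∈ H.arc a y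
      · exact Or.inr ⟨hyx, h⟩
      · exact Or.inl ⟨hyx, h⟩
    · refine ⟨a, arm_mem ha, ha, ?_⟩
      rw [H.arc_self]
      exact fun h => ha (mem_singleton_iff.1 h).symm
  exact (hsub (heq ▸ arm_mem hb)).2

end HubbardTree
namespace HubbardTree
open Set Topology

theorem f_arc {X : Type*} [TopologicalSpace X] (H : HubbardTree X) {a b : X}
    (hab : H.c0 ∈ H.arc a b → H.c0 = a ∨ H.c0 = b) :
    InjOn H.f (H.arc a b) ∧ (∀ x ∈ H.arc a b, H.f x ∈ H.arc (H.f a) (H.f b)) ∧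
      ∀ y ∈ H.arc (H.f a) (H.f b), ∃ x ∈ H.arc a b, H.f x = y := by
  have := H.t2
  obtain ⟨T, hT, g, hg, hi, h0, h1, hA⟩ := H.param a b
  have hc : ∀ u, 0 < u → u < T → g u ≠ H.c0 := by
    intro u hu huT he
    have hum : u ∈ Icc 0 T := ⟨hu.le, huT.le⟩
    rcases hab (by rw [hA]; exact ⟨u, hum, he⟩) with h | h
    · have := hi hum ⟨le_rfl, hT⟩ (by rw [he, h, h0])
      linarith
    · have := hi hum ⟨hT, le_rfl⟩ (by rw [he, h, h1])
      linarith
  have hfg : Continuous (fun u => H.f (g u)) := H.cont.comp hg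
  have hloc : ∀ s t u, 0 ≤ s → t ≤ T → u ∈ Ioo s t → ∃ ε > 0, Icc (u - ε) (u + ε) ⊆ Ioo s t ∧
      InjOn (fun u => H.f (g u)) (Icc (u - ε) (u + ε)) := by
    intro s t u hs ht hu
    obtain ⟨U, hU, hxU, hemb⟩ := H.local_homeo (g u) (hc u (by linarith [hu.1]) (by linarith [hu.2]))
    have hinj : InjOn H.f U := Set.injOn_iff_injective.2 hemb.injective
    have hnhds : g ⁻¹' U ∩ Ioo s t ∈ 𝓝 u :=
      Filter.inter_mem (hg.continuousAt.preimage_mem_nhds (hU.mem_nhds hxU)) (isOpen_Ioo.mem_nhds hu)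
    obtain ⟨ε, hε, hsub⟩ := Metric.nhds_basis_closedBall.mem_iff.1 hnhds
    rw [Real.closedBall_eq_Icc] at hsub
    refine ⟨ε, hε, fun v hv => (hsub hv).2, ?_⟩
    intro v hv w hw hvw
    have hv' := hsub hv
    have hw' := hsub hw
    have h2 := hinj hv'.1 hw'.1 hvw
    exact hi ⟨by linarith [hv'.2.1], by linarith [hv'.2.2]⟩
      ⟨by linarith [hw'.2.1], by linarith [hw'.2.2]⟩ h2
  have key : ∀ s t, 0 ≤ s → s < t → t ≤ T → H.f (g s) ≠ H.f (g t) := by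
    intro s t hs hst ht he
    have hZc : IsCompact ((fun u => H.f (g u)) '' Icc s t) := isCompact_Icc.image hfg
    have hZp : IsPreconnected ((fun u => H.f (g u)) '' Icc s t) :=
      isPreconnected_Icc.image _ hfg.continuousOn
    have hmid : (s + t) / 2 ∈ Ioo s t := ⟨by linarith, by linarith⟩
    obtain ⟨ε, hε, hsub, hinj⟩ := hloc s t _ hs ht hmid
    have hne : ∃ q ∈ (fun u => H.f (g u)) '' Icc s t, q ≠ H.f (g s) := by
      by_contra hcon
      push Not at hcon
      have m1 : (s + t) / 2 - ε ∈ Icc ((s + t) / 2 - ε) ((s + t) / 2 + ε) := ⟨by linarith, by linarith⟩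
      have m2 : (s + t) / 2 + ε ∈ Icc ((s + t) / 2 - ε) ((s + t) / 2 + ε) := ⟨by linarith, by linarith⟩
      have e1 := hcon _ ⟨_, Ioo_subset_Icc_self (hsub m1), rfl⟩
      have e2 := hcon _ ⟨_, Ioo_subset_Icc_self (hsub m2), rfl⟩
      have := hinj m1 m2 (e1.trans e2.symm)
      linarith
    obtain ⟨q, ⟨u, hu, rfl⟩, hq, hqc⟩ := noncut_set hZc hZp ⟨s, ⟨le_rfl, hst.le⟩, rfl⟩ hne
    simp only at hq hqc
    have hus : s < u := lt_of_le_of_ne hu.1 (fun h => hq (by rw [h]))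
    have hut : u < t := lt_of_le_of_ne hu.2 (fun h => hq (by rw [h, he]))
    obtain ⟨δ, hδ, hsub2, hinj2⟩ := hloc s t u hs ht ⟨hus, hut⟩
    have m1 : u - δ ∈ Icc (u - δ) (u + δ) := ⟨by linarith, by linarith⟩
    have m2 : u + δ ∈ Icc (u - δ) (u + δ) := ⟨by linarith, by linarith⟩
    have m0 : u ∈ Icc (u - δ) (u + δ) := ⟨by linarith, by linarith⟩
    have n1 : H.f (g (u - δ)) ≠ H.f (g u) := fun h => by
      have := hinj2 m1 m0 h
      linarith
    have n2 : H.f (g (u + δ)) ≠ H.f (g u) := fun h => by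
      have := hinj2 m2 m0 h
      linarith
    have harc := H.arc_of_inj (fun u => H.f (g u)) (by linarith : u - δ ≤ u + δ)
      hfg.continuousOn hinj2
    have hmem : H.f (g u) ∈ H.arc (H.f (g (u - δ))) (H.f (g (u + δ))) := by
      rw [harc]
      exact ⟨u, m0, rfl⟩
    refine (H.arm_eq_iff n1 n2).1 ?_ hmem
    apply connectedComponentIn_eq
    refine hqc.subset_connectedComponentIn
      ⟨⟨_, Ioo_subset_Icc_self (hsub2 m1), rfl⟩, n1⟩ (fun y hy => hy.2)
      ⟨⟨_, Ioo_subset_Icc_self (hsub2 m2), rfl⟩, n2⟩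
  have hinj : InjOn (fun u => H.f (g u)) (Icc 0 T) := by
    intro s hs t ht he
    rcases lt_trichotomy s t with h | h | h
    · exact absurd he (key s t hs.1 h ht.2)
    · exact h
    · exact absurd he.symm (key t s ht.1 h hs.2)
  have harc := H.arc_of_inj (fun u => H.f (g u)) hT hfg.continuousOn hinj
  simp only [h0, h1] at harc
  rw [hA, harc]
  refine ⟨?_, ?_, ?_⟩
  · rintro _ ⟨u, hu, rfl⟩ _ ⟨v, hv, rfl⟩ he
    rw [hinj hu hv he]
  rotate_left
  · rintro _ ⟨u, hu, rfl⟩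
    exact ⟨g u, ⟨u, hu, rfl⟩, rfl⟩
  · rintro _ ⟨u, hu, rfl⟩
    exact ⟨u, hu, rfl⟩

open Classical in
/-- truncation of a representative of a local arm at the critical point -/
noncomputable def tr {X : Type*} [TopologicalSpace X] (H : HubbardTree X) (x y : X) : X :=
  if x ∈ H.arc y H.c0 then y else H.c0

theorem arc_swap {X : Type*} [TopologicalSpace X] (H : HubbardTree X) {x y a b : X}
    (h : x ∈ H.arc y b) (hn : x ∉ H.arc y a) : x ∈ H.arc a b :=
  (H.arc_tri (b := a) h).resolve_left hn

theorem tr_props {X : Type*} [TopologicalSpace X] (H : HubbardTree X) {x y : X} (hx : x ≠ H.c0)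
    (hy : y ≠ x) : H.tr x y ≠ x ∧ x ∉ H.arc y (H.tr x y) ∧
      (H.c0 ∈ H.arc (H.tr x y) x → H.c0 = H.tr x y) := by
  unfold tr
  split_ifs with h
  · refine ⟨hy, ?_, ?_⟩
    · rw [H.arc_self]
      exact fun h => hy (mem_singleton_iff.1 h).symm
    · intro h2
      exact absurd (H.arc_antisymm h h2) hx
  · exact ⟨hx.symm, h, fun _ => rfl⟩

theorem tr_sep {X : Type*} [TopologicalSpace X] (H : HubbardTree X) {x y y' : X} (hx : x ≠ H.c0)
    (hy : y ≠ x) (hy' : y' ≠ x) (h : x ∈ H.arc y y') :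
    H.f x ∈ H.arc (H.f (H.tr x y)) (H.f (H.tr x y')) ∧ H.f (H.tr x y) ≠ H.f x ∧
      H.f (H.tr x y') ≠ H.f x := by
  obtain ⟨a1, a2, a3⟩ := H.tr_props hx hy
  obtain ⟨b1, b2, b3⟩ := H.tr_props hx hy'
  have h1 : x ∈ H.arc (H.tr x y) (H.tr x y') := by
    have h1 := H.arc_swap h a2
    rw [H.arc_comm] at h1
    have h2 := H.arc_swap h1 b2
    rwa [H.arc_comm] at h2
  have hm := H.f_arc (a := H.tr x y) (b := H.tr x y') (by
    intro hc
    rcases H.arc_tri (b := x) hc with hc | hc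
    · exact Or.inl (a3 hc)
    · rw [H.arc_comm] at hc
      exact Or.inr (b3 hc))
  refine ⟨hm.2.1 x h1, fun he => a1 ?_, fun he => b1 ?_⟩
  · exact hm.1 (H.left_mem _ _) h1 he
  · exact hm.1 (H.right_mem _ _) h1 he

theorem endpoint_not_thru {X : Type*} [TopologicalSpace X] (H : HubbardTree X) {x y y' : X}
    (hx : IsEndpoint x) (hy : y ≠ x) (hy' : y' ≠ x) : x ∉ H.arc y y' := by
  unfold IsEndpoint at hx
  rw [Set.ncard_eq_one] at hx
  obtain ⟨C, hC⟩ := hx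
  have h1 : armTo x y ∈ arms x := ⟨y, hy, rfl⟩
  have h2 : armTo x y' ∈ arms x := ⟨y', hy', rfl⟩
  rw [hC, mem_singleton_iff] at h1 h2
  exact (H.arm_eq_iff hy hy').1 (h1.trans h2.symm)

theorem exists_endpoint {X : Type*} [TopologicalSpace X] (H : HubbardTree X) :
    ∃ e : X, IsEndpoint e := by
  obtain ⟨e, he, _⟩ := H.cover H.crit_not_fixed
  exact ⟨e, he⟩

theorem c1_not_thru {X : Type*} [TopologicalSpace X] (H : HubbardTree X)
    (hper : ∃ N, H.f^[N] H.c1 = H.c0) {y y' : X} (hy : y ≠ H.c1) (hy' : y' ≠ H.c1) :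
    H.c1 ∉ H.arc y y' := by
  intro hcon
  obtain ⟨N, hN⟩ := hper
  have hall : ∀ k : ℕ, ∃ y y', y ≠ H.f^[k] H.c1 ∧ y' ≠ H.f^[k] H.c1 ∧ H.f^[k] H.c1 ∈ H.arc y y' := by
    intro k
    induction k with
    | zero => exact ⟨y, y', hy, hy', hcon⟩
    | succ k ih =>
      rw [Function.iterate_succ_apply']
      by_cases hc : H.f^[k] H.c1 = H.c0
      · rw [hc]
        exact ⟨y, y', hy, hy', hcon⟩
      · obtain ⟨p, q, hp, hq, hpq⟩ := ih
        obtain ⟨h1, h2, h3⟩ := H.tr_sep hc hp hq hpq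
        exact ⟨_, _, h2, h3, h1⟩
  obtain ⟨e, he⟩ := H.exists_endpoint
  obtain ⟨k, hk⟩ := H.endpoints_on_orbit e he
  obtain ⟨p, q, hp, hq, hpq⟩ := hall (k + N)
  rw [Function.iterate_add_apply, hN, hk] at hp hq hpq
  exact H.endpoint_not_thru he hp hq hpq

theorem common_germ {X : Type*} [TopologicalSpace X] (H : HubbardTree X) {x p q : X}
    (hp : p ≠ x) (hq : q ≠ x) (h : x ∉ H.arc p q) :
    ∃ w, w ≠ x ∧ w ∈ H.arc x p ∧ w ∈ H.arc x q := by
  have := H.t2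
  obtain ⟨S, hS, k, hk, ki, k0, k1, kA⟩ := H.param x p
  have hS0 : 0 < S := lt_of_le_of_ne hS (fun h => hp (by rw [← k1, ← h, k0]))
  have hn : k ⁻¹' (H.arc q p)ᶜ ∈ 𝓝 (0 : ℝ) := by
    apply hk.continuousAt.preimage_mem_nhds
    rw [k0]
    apply (H.arc_compact q p).isClosed.isOpen_compl.mem_nhds
    rwa [mem_compl_iff, H.arc_comm]
  obtain ⟨ε, hε, hsub⟩ := Metric.nhds_basis_closedBall.mem_iff.1 hn
  rw [Real.closedBall_eq_Icc] at hsub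
  have hm0 : 0 < min ε S := lt_min hε hS0
  have hmS : min ε S ∈ Icc 0 S := ⟨hm0.le, min_le_right _ _⟩
  have hmem : k (min ε S) ∈ H.arc x p := by rw [kA]; exact ⟨_, hmS, rfl⟩
  refine ⟨k (min ε S), fun he => ?_, hmem, ?_⟩
  · have := ki hmS ⟨le_rfl, hS⟩ (by rw [he, k0])
    linarith
  · refine (H.arc_tri (b := q) hmem).resolve_right ?_
    exact hsub ⟨by linarith, by linarith [min_le_left ε S]⟩

theorem not_back {X : Type*} [TopologicalSpace X] (H : HubbardTree X) {c x a : X}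
    (hx : x ≠ c) (h : x ∈ H.arc c a) : c ∉ H.arc x a := by
  intro h2
  rw [H.arc_comm] at h h2
  exact hx (H.arc_antisymm h h2)

theorem no_three {X : Type*} [TopologicalSpace X] (H : HubbardTree X)
    (hper : ∃ N, H.f^[N] H.c1 = H.c0) {a1 a2 a3 : X} (h1 : a1 ≠ H.c0) (h2 : a2 ≠ H.c0)
    (h3 : a3 ≠ H.c0) (h12 : H.c0 ∈ H.arc a1 a2) (h13 : H.c0 ∈ H.arc a1 a3)
    (h23 : H.c0 ∈ H.arc a2 a3) : False := by
  have hf : ∀ a, InjOn H.f (H.arc H.c0 a) ∧ (∀ x ∈ H.arc H.c0 a, H.f x ∈ H.arc H.c1 (H.f a)) ∧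
      ∀ y ∈ H.arc H.c1 (H.f a), ∃ x ∈ H.arc H.c0 a, H.f x = y :=
    fun a => H.f_arc (fun _ => Or.inl rfl)
  have hne : ∀ a, a ≠ H.c0 → H.f a ≠ H.c1 := fun a ha he =>
    ha ((hf a).1 (H.right_mem _ _) (H.left_mem _ _) he)
  obtain ⟨w, hw, hw1, hw2⟩ := H.common_germ (hne a1 h1) (hne a2 h2)
    (H.c1_not_thru hper (hne a1 h1) (hne a2 h2))
  obtain ⟨v, hv, hvw, hv3⟩ := H.common_germ hw (hne a3 h3)
    (H.c1_not_thru hper hw (hne a3 h3))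
  have hv1 := (H.arc_sub hw1 hvw).1
  have hv2 := (H.arc_sub hw2 hvw).1
  obtain ⟨x1, hx1, e1⟩ := (hf a1).2.2 v hv1
  obtain ⟨x2, hx2, e2⟩ := (hf a2).2.2 v hv2
  obtain ⟨x3, hx3, e3⟩ := (hf a3).2.2 v hv3
  have hxc : ∀ x, H.f x = v → x ≠ H.c0 := fun x hx hc => hv (by rw [← hx, hc]; rfl)
  have hdis : ∀ x a b, x ≠ H.c0 → x ∈ H.arc H.c0 a → x ∈ H.arc H.c0 b → H.c0 ∉ H.arc a b := by
    intro x a b hx ha hb hab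
    have n1 := H.not_back hx ha
    rw [H.arc_comm] at n1
    exact H.not_back hx hb (H.arc_swap hab n1)
  obtain ⟨p, q, hpq⟩ := H.two_preimages v
  have m1 : x1 ∈ ({p, q} : Set X) := hpq e1
  have m2 : x2 ∈ ({p, q} : Set X) := hpq e2
  have m3 : x3 ∈ ({p, q} : Set X) := hpq e3
  have d12 : x1 ≠ x2 := fun h => hdis x1 a1 a2 (hxc _ e1) hx1 (h ▸ hx2) h12
  have d13 : x1 ≠ x3 := fun h => hdis x1 a1 a3 (hxc _ e1) hx1 (h ▸ hx3) h13
  have d23 : x2 ≠ x3 := fun h => hdis x2 a2 a3 (hxc _ e2) hx2 (h ▸ hx3) h23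
  simp only [mem_insert_iff, mem_singleton_iff] at m1 m2 m3
  rcases m1 with m1 | m1 <;> rcases m2 with m2 | m2 <;> rcases m3 with m3 | m3 <;> simp_all

theorem branch_iff {X : Type*} [TopologicalSpace X] (H : HubbardTree X) (x : X) :
    IsBranchPt x ↔ ∃ a b c, a ≠ x ∧ b ≠ x ∧ c ≠ x ∧ x ∈ H.arc a b ∧ x ∈ H.arc a c ∧
      x ∈ H.arc b c := by
  unfold IsBranchPt
  rw [show (3 ≤ (arms x).ncard ↔ 2 < (arms x).ncard) from Iff.rfl,
    Set.two_lt_ncard_iff (H.arms_finite x)]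
  constructor
  · rintro ⟨_, _, _, ⟨a, ha, rfl⟩, ⟨b, hb, rfl⟩, ⟨c, hc, rfl⟩, h1, h2, h3⟩
    refine ⟨a, b, c, ha, hb, hc, ?_, ?_, ?_⟩ <;> by_contra hn
    · exact h1 (H.arm_eq_of_not_mem hn)
    · exact h2 (H.arm_eq_of_not_mem hn)
    · exact h3 (H.arm_eq_of_not_mem hn)
  · rintro ⟨a, b, c, ha, hb, hc, h1, h2, h3⟩
    exact ⟨armTo x a, armTo x b, armTo x c, ⟨a, ha, rfl⟩, ⟨b, hb, rfl⟩, ⟨c, hc, rfl⟩,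
      fun h => (H.arm_eq_iff ha hb).1 h h1, fun h => (H.arm_eq_iff ha hc).1 h h2,
      fun h => (H.arm_eq_iff hb hc).1 h h3⟩

theorem branch_map {X : Type*} [TopologicalSpace X] (H : HubbardTree X) {x : X} (hx : x ≠ H.c0)
    (h : IsBranchPt x) : IsBranchPt (H.f x) := by
  rw [H.branch_iff] at h ⊢
  obtain ⟨a, b, c, ha, hb, hc, h1, h2, h3⟩ := h
  obtain ⟨p1, q1, r1⟩ := H.tr_sep hx ha hb h1
  obtain ⟨p2, q2, r2⟩ := H.tr_sep hx ha hc h2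
  obtain ⟨p3, q3, r3⟩ := H.tr_sep hx hb hc h3
  exact ⟨_, _, _, q1, r1, r2, p1, p2, p3⟩

end HubbardTree
namespace HubbardTree
open Set Topology

variable {X : Type*} [TopologicalSpace X] (H : HubbardTree X)

theorem c1_hits {n : ℕ} (h : StarPeriodic H.kneading n) : ∃ N, H.f^[N] H.c1 = H.c0 := by
  obtain ⟨h2, h1, hs, -⟩ := h
  refine ⟨n - 1, ?_⟩
  unfold kneading itin symOf at hs
  by_contra hc
  simp only [hc, if_false] at hs
  split_ifs at hs

theorem orbit_hits (hp : ∃ N, H.f^[N] H.c1 = H.c0) (k : ℕ) : ∃ N, H.f^[N] (H.f^[k] H.c0) = H.c0 := by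
  obtain ⟨N, hN⟩ := hp
  have h1 : H.f^[N+1] H.c0 = H.c0 := hN
  have h2 : H.f^[(N+1) * (k+1)] H.c0 = H.c0 := by
    rw [Function.iterate_mul]
    exact Function.iterate_fixed h1 _
  refine ⟨(N+1)*(k+1) - k, ?_⟩
  rw [← Function.iterate_add_apply, Nat.sub_add_cancel, h2]
  nlinarith

theorem endpoint_hits (hp : ∃ N, H.f^[N] H.c1 = H.c0) {e : X} (he : IsEndpoint e) :
    ∃ N, H.f^[N] e = H.c0 := by
  obtain ⟨k, rfl⟩ := H.endpoints_on_orbit e he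
  exact H.orbit_hits hp k

theorem mem_arm_iff {x a b : X} (ha : a ≠ x) (hb : b ≠ x) : b ∈ armTo x a ↔ x ∉ H.arc a b := by
  rw [← H.arm_eq_iff ha hb]
  constructor
  · intro h
    exact connectedComponentIn_eq h
  · intro h
    rw [h]
    exact arm_mem hb

theorem mem_T1 {a : X} (ha : a ≠ H.c0) : a ∈ H.T1 ↔ H.c0 ∉ H.arc H.c1 a :=
  H.mem_arm_iff H.crit_not_fixed ha

theorem sym_one {a : X} (ha : a ≠ H.c0) (h : H.c0 ∉ H.arc H.c1 a) : H.symOf a = Sym.one := by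
  unfold symOf
  rw [if_neg ha, if_pos ((H.mem_T1 ha).2 h)]

theorem sym_zero {a : X} (ha : a ≠ H.c0) (h : H.c0 ∈ H.arc H.c1 a) : H.symOf a = Sym.zero := by
  unfold symOf
  rw [if_neg ha, if_neg (fun h' => (H.mem_T1 ha).1 h' h)]

theorem sym_sep (hp : ∃ N, H.f^[N] H.c1 = H.c0) {a b : X} (ha : a ≠ H.c0)
    (h : H.symOf a = H.symOf b) : H.c0 ∉ H.arc a b := by
  have hb : b ≠ H.c0 := by
    intro hb
    unfold symOf at h
    simp only [ha, hb, if_false, if_true] at h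
    split_ifs at h
  intro hc
  by_cases h1 : H.c0 ∈ H.arc H.c1 a <;> by_cases h2 : H.c0 ∈ H.arc H.c1 b
  · exact H.no_three hp H.crit_not_fixed ha hb h1 h2 hc
  · rw [H.sym_zero ha h1, H.sym_one hb h2] at h; cases h
  · rw [H.sym_one ha h1, H.sym_zero hb h2] at h; cases h
  · rcases H.arc_tri (b := H.c1) hc with h3 | h3
    · rw [H.arc_comm] at h3; exact h1 h3
    · exact h2 h3

theorem sym_eq {a b : X} (h : H.c0 ∉ H.arc a b) : H.symOf a = H.symOf b := by
  have ha : a ≠ H.c0 := fun e => h (e ▸ H.left_mem a b)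
  have hb : b ≠ H.c0 := fun e => h (e ▸ H.right_mem a b)
  have : H.c0 ∈ H.arc H.c1 a ↔ H.c0 ∈ H.arc H.c1 b := by
    constructor
    · intro h3
      rcases H.arc_tri (b := b) h3 with h4 | h4
      · exact h4
      · rw [H.arc_comm] at h4; exact absurd h4 h
    · intro h3
      rcases H.arc_tri (b := a) h3 with h4 | h4
      · exact h4
      · exact absurd h4 h
  by_cases h1 : H.c0 ∈ H.arc H.c1 a
  · rw [H.sym_zero ha h1, H.sym_zero hb (this.1 h1)]
  · rw [H.sym_one ha h1, H.sym_one hb (fun h' => h1 (this.2 h'))]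

theorem iter_arc {a b x : X} (hx : x ∈ H.arc a b) (k : ℕ)
    (h : ∀ j < k, H.c0 ∉ H.arc (H.f^[j] a) (H.f^[j] b)) :
    H.f^[k] x ∈ H.arc (H.f^[k] a) (H.f^[k] b) := by
  induction k with
  | zero => exact hx
  | succ k ih =>
    have h1 := ih (fun j hj => h j (by omega))
    simp only [Function.iterate_succ_apply']
    exact (H.f_arc (fun hc => absurd hc (h k (by omega)))).2.1 _ h1

theorem shadow_step {y w : X} (hw : y ∈ H.arc H.c0 w) (hn : H.f y ∉ H.arc H.c0 H.c1) :
    H.f y ∈ H.arc H.c0 (H.f w) := by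
  have h1 := (H.f_arc (a := H.c0) (b := w) (fun _ => Or.inl rfl)).2.1 _ hw
  refine (H.arc_tri (b := H.c0) h1).resolve_left ?_
  rw [H.arc_comm]; exact hn

theorem shadow_iter {y w : X} (hw : y ∈ H.arc H.c0 w) (k : ℕ)
    (hn : ∀ j, 1 ≤ j → j ≤ k → H.f^[j] y ∉ H.arc H.c0 H.c1) :
    H.f^[k] y ∈ H.arc H.c0 (H.f^[k] w) := by
  induction k with
  | zero => exact hw
  | succ k ih =>
    have h1 := ih (fun j hj hj' => hn j hj (by omega))
    have h2 := hn (k+1) (by omega) le_rfl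
    simp only [Function.iterate_succ_apply'] at h2 ⊢
    exact H.shadow_step h1 h2

theorem not_c0_of_shadow {y w : X} (hy : y ≠ H.c0) (hw : y ∈ H.arc H.c0 w) : w ≠ H.c0 := by
  rintro rfl
  rw [H.arc_self] at hw
  exact hy hw

theorem exists_char (hp : ∃ N, H.f^[N] H.c1 = H.c0) {z : X} {m : ℕ} (hper : ExactPeriod H.f z m)
    (hn : ∀ k : ℕ, H.f^[k] z ≠ H.c0) : ∃ k < m, H.f^[k] z ∈ H.arc H.c0 H.c1 ∧
      ∀ j, H.f^[j] z ≠ H.f^[k] z → H.f^[k] z ∉ H.arc H.c0 (H.f^[j] z) := by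
  obtain ⟨hm, hz, -⟩ := hper
  have hmod : ∀ j, H.f^[j] z = H.f^[j % m] z := fun j => by
    conv_lhs => rw [← Nat.mod_add_div j m, Function.iterate_add_apply, Function.iterate_mul,
      Function.iterate_fixed hz]
  -- S1
  have S1 : ∃ k < m, H.f^[k] z ∈ H.arc H.c0 H.c1 := by
    by_contra hcon
    push Not at hcon
    obtain ⟨e, he, hze⟩ := H.cover (hn 0)
    obtain ⟨N, hN⟩ := H.endpoint_hits hp he
    have := H.shadow_iter hze N (fun j _ _ => by
      show H.f^[j] z ∉ _
      rw [hmod j]; exact hcon _ (Nat.mod_lt _ (by omega)))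
    exact H.not_c0_of_shadow (hn N) this hN
  -- S2
  have S2 : ∃ k < m, H.f^[k] z ∈ H.arc H.c0 H.c1 ∧ ∀ j < m, H.f^[j] z ∈ H.arc H.c0 H.c1 →
      H.f^[j] z ∈ H.arc H.c0 (H.f^[k] z) := by
    obtain ⟨T, hT, g, hg, hi, h0, h1, hA⟩ := H.param H.c0 H.c1
    have hch : ∀ k, ∃ t, H.f^[k] z ∈ H.arc H.c0 H.c1 → t ∈ Icc 0 T ∧ g t = H.f^[k] z := by
      intro k
      by_cases h : H.f^[k] z ∈ H.arc H.c0 H.c1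
      · rw [hA] at h
        obtain ⟨t, ht, e⟩ := h
        exact ⟨t, fun _ => ⟨ht, e⟩⟩
      · exact ⟨0, fun h' => absurd h' h⟩
    choose τ hτ using hch
    classical
    obtain ⟨k0, hk0, hk0'⟩ := S1
    obtain ⟨k, hk, hmax⟩ := Finset.exists_max_image
      ((Finset.range m).filter (fun k => H.f^[k] z ∈ H.arc H.c0 H.c1)) τ
      ⟨k0, by simp [hk0, hk0']⟩
    simp only [Finset.mem_filter, Finset.mem_range] at hk hmax
    refine ⟨k, hk.1, hk.2, fun j hj hj' => ?_⟩
    obtain ⟨a1, a2⟩ := hτ k hk.2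
    obtain ⟨b1, b2⟩ := hτ j hj'
    have e1 := H.arc_of_inj g a1.1 hg.continuousOn (hi.mono (Icc_subset_Icc_right a1.2))
    rw [h0, a2] at e1
    rw [e1, ← b2]
    exact ⟨τ j, ⟨b1.1, hmax j ⟨hj, hj'⟩⟩, rfl⟩
  obtain ⟨k, hk, hw, hcl⟩ := S2
  refine ⟨k, hk, hw, fun j0 hj0 hc => ?_⟩
  -- S3
  set w := H.f^[k] z with hwdef
  have hwn : ∀ i, H.f^[i] w ≠ H.c0 := fun i => by
    rw [hwdef, ← Function.iterate_add_apply]; exact hn _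
  have hcl' : ∀ i, H.f^[i] w ∈ H.arc H.c0 H.c1 → H.f^[i] w ∈ H.arc H.c0 w := fun i => by
    rw [hwdef, ← Function.iterate_add_apply, hmod (i+k)]
    exact hcl _ (Nat.mod_lt _ (by omega))
  obtain ⟨u, hu⟩ : ∃ u, H.f^[j0] z = H.f^[u] w := by
    refine ⟨j0 + (m - k), ?_⟩
    rw [hwdef, ← Function.iterate_add_apply, show j0 + (m-k) + k = j0 + m by omega,
      Function.iterate_add_apply, hz]
  rw [hu] at hc hj0
  have hu0 : H.f^[u] w ∉ H.arc H.c0 H.c1 := fun h => hj0 (H.arc_antisymm (hcl' u h) hc)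
  classical
  let P : ℕ → Prop := fun j => H.f^[j] w ∈ H.arc H.c0 H.c1
  have hP0 : P 0 := hw
  obtain ⟨j, hjle, hPj, hjmax⟩ : ∃ j ≤ u, P j ∧ ∀ i, j < i → i ≤ u → ¬ P i :=
    ⟨Nat.findGreatest P u, Nat.findGreatest_le u, Nat.findGreatest_spec (Nat.zero_le u) hP0,
      fun i h1 h2 => Nat.findGreatest_is_greatest h1 h2⟩
  have hju : j ≠ u := fun h => hu0 (h ▸ hPj)
  have hkey : ∀ N x, H.f^[j] w ∈ H.arc H.c0 x → H.f^[N] x ≠ H.c0 := by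
    intro N
    induction N using Nat.strong_induction_on with
    | _ N ih =>
      intro x hx
      have hit : ∀ l ≤ u - j, H.f^[l] (H.f^[j] w) ∈ H.arc H.c0 (H.f^[l] x) := by
        intro l hl
        refine H.shadow_iter hx l (fun i hi hi' => ?_)
        rw [← Function.iterate_add_apply]
        exact hjmax (i+j) (by omega) (by omega)
      by_cases hN : N < u - j
      · refine H.not_c0_of_shadow ?_ (hit N hN.le)
        rw [← Function.iterate_add_apply]; exact hwn _
      · have h1 := hit (u-j) le_rfl
        rw [← Function.iterate_add_apply, Nat.sub_add_cancel hjle] at h1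
        have h2 := (H.arc_sub h1 hc).1
        have h3 := (H.arc_sub h2 (hcl' j hPj)).1
        have h4 := ih (N - (u-j)) (by omega) _ h3
        rwa [← Function.iterate_add_apply, Nat.sub_add_cancel (by omega)] at h4
  obtain ⟨N, hN⟩ := hp
  exact hkey N _ hPj hN

theorem char_of (hp : ∃ N, H.f^[N] H.c1 = H.c0) {w : X} (hn : ∀ k : ℕ, H.f^[k] w ≠ H.c0)
    (hw : w ∈ H.arc H.c0 H.c1) (h : ∀ j, H.f^[j] w ≠ w → w ∉ H.arc H.c0 (H.f^[j] w)) :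
    H.IsCharacteristic w := by
  have h0 : H.c0 ≠ w := (hn 0).symm
  have h1 : H.c1 ≠ w := by
    rintro rfl
    obtain ⟨N, hN⟩ := hp
    exact hn N hN
  refine ⟨armTo w H.c1, armTo w H.c0, ⟨_, h1, rfl⟩, ⟨_, h0, rfl⟩, ?_, arm_mem h1, arm_mem h0, ?_⟩
  · intro he
    exact (H.arm_eq_iff h1 h0).1 he (H.arc_comm _ _ ▸ hw)
  · intro k hk
    exact (H.mem_arm_iff h0 hk).2 (h k hk)

end HubbardTree
namespace HubbardTree
open Set Topology

variable {X : Type*} [TopologicalSpace X] (H : HubbardTree X)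

theorem sum_rot (F : ℕ → ℕ) (m : ℕ) (hF : ∀ j, F (j + m) = F j) (k : ℕ) :
    ∑ j ∈ Finset.range m, F (j + k) = ∑ j ∈ Finset.range m, F j := by
  induction k with
  | zero => rfl
  | succ k ih =>
    rw [← ih]
    have h1 := Finset.sum_range_succ' (fun j => F (j + k)) m
    have h2 := Finset.sum_range_succ (fun j => F (j + k)) m
    have h3 : F (m + k) = F (0 + k) := by rw [Nat.zero_add, Nat.add_comm, hF]
    have h4 : ∀ j, j + 1 + k = j + (k + 1) := fun j => by omega
    simp only [h4] at h1
    omega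

theorem sym_star {a : X} : H.symOf a = Sym.star ↔ a = H.c0 := by
  unfold symOf
  split_ifs with h1 h2
  · simp [h1]
  · simp [h1]
  · simp [h1]

theorem part1 (hp : ∃ N, H.f^[N] H.c1 = H.c0)
    (z : X) (m : ℕ) (hper : ExactPeriod H.f z m)
    (hn : ∀ k : ℕ, H.f^[k] z ≠ H.c0)
    (hitin : ¬ IsBranchPt z → ∀ m' : ℕ, 1 ≤ m' →
      (∀ k : ℕ, 1 ≤ k → H.itin z (k + m') = H.itin z k) → m ≤ m')
    (hag : ∀ k : ℕ, 1 ≤ k → k ≤ m - 1 → H.itin z k = H.kneading k) :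
      H.IsCharacteristic z := by
  obtain ⟨k, hk, hw, hch⟩ := H.exists_char hp hper hn
  obtain ⟨hm, hz, hmin⟩ := hper
  rcases Nat.eq_zero_or_pos k with rfl | hk0
  · exact H.char_of hp hn hw hch
  exfalso
  have hwz : z ≠ H.f^[k] z := (hmin k hk0 hk).symm
  have hw1 : H.f^[k] z ∈ H.arc z H.c1 := (H.arc_tri (b := z) hw).resolve_left (hch 0 hwz)
  have hs : ∀ j < m - 1, H.c0 ∉ H.arc (H.f^[j] z) (H.f^[j] H.c1) := by
    intro j hj
    have := hag (j+1) (by omega) (by omega)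
    unfold kneading itin at this
    simp only [Nat.add_sub_cancel] at this
    exact H.sym_sep hp (hn j) this
  have hsym : ∀ j < m - 1, H.symOf (H.f^[j+k] z) = H.symOf (H.f^[j] z) := by
    intro j hj
    have h1 := H.iter_arc hw1 j (fun i hi => hs i (by omega))
    rw [← Function.iterate_add_apply] at h1
    exact (H.sym_eq (fun h => hs j hj (H.arc_sub h1 h).1)).symm
  have hpm : ∀ j, H.f^[j+m] z = H.f^[j] z := fun j => by
    rw [Function.iterate_add_apply, hz]
  have hmod : ∀ j, H.f^[j] z = H.f^[j % m] z := fun j => by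
    conv_lhs => rw [← Nat.mod_add_div j m, Function.iterate_add_apply, Function.iterate_mul,
      Function.iterate_fixed hz]
  let F : ℕ → ℕ := fun j => if H.symOf (H.f^[j] z) = Sym.one then 1 else 0
  have hlast : H.symOf (H.f^[m-1+k] z) = H.symOf (H.f^[m-1] z) := by
    have h1 := sum_rot F m (fun j => by simp only [F, hpm]) k
    obtain ⟨m', rfl⟩ : ∃ m', m = m' + 1 := ⟨m - 1, by omega⟩
    rw [Finset.sum_range_succ, Finset.sum_range_succ] at h1
    have h2 : ∑ j ∈ Finset.range m', F (j + k) = ∑ j ∈ Finset.range m', F j := by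
      refine Finset.sum_congr rfl (fun j hj => ?_)
      simp only [F, hsym j (by simpa using hj)]
    have h3 : F (m' + k) = F m' := by omega
    simp only [F] at h3
    simp only [Nat.add_sub_cancel]
    have n1 : H.symOf (H.f^[m'+k] z) ≠ Sym.star := fun h => hn _ (H.sym_star.1 h)
    have n2 : H.symOf (H.f^[m'] z) ≠ Sym.star := fun h => hn _ (H.sym_star.1 h)
    cases h4 : H.symOf (H.f^[m'+k] z) <;> cases h5 : H.symOf (H.f^[m'] z) <;> simp_all
  have hall : ∀ j, H.symOf (H.f^[j+k] z) = H.symOf (H.f^[j] z) := by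
    intro j
    have e : H.f^[j+k] z = H.f^[j % m + k] z := by
      rw [hmod (j+k), hmod (j % m + k), Nat.mod_add_mod]
    rw [e, hmod j]
    have : j % m < m := Nat.mod_lt _ (by omega)
    rcases Nat.lt_or_ge (j % m) (m-1) with h | h
    · exact hsym _ h
    · have h' : j % m = m - 1 := by omega
      rw [h']; exact hlast
  by_cases hb : IsBranchPt z
  · have hbw : ∀ i, IsBranchPt (H.f^[i] z) := by
      intro i
      induction i with
      | zero => exact hb
      | succ i ih =>
        rw [Function.iterate_succ_apply']
        exact H.branch_map (hn i) ih
    obtain ⟨N, x, hx, hxN⟩ := H.expansive z (H.f^[k] z) hwz (Or.inl hb) (Or.inl (hbw k))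
    have hno : ∀ j, H.c0 ∉ H.arc (H.f^[j] z) (H.f^[j] (H.f^[k] z)) := by
      intro j
      rw [← Function.iterate_add_apply]
      exact H.sym_sep hp (hn j) (hall j).symm
    have := H.iter_arc hx N (fun j _ => hno j)
    rw [hxN] at this
    exact hno N this
  · have := hitin hb k hk0 (fun i hi => by
      unfold itin
      rw [show i + k - 1 = i - 1 + k by omega]
      exact hall _)
    omega

/-- tracking of directions along the orbit of `z`. -/
noncomputable def Y (z y : X) : ℕ → X
  | 0 => y
  | j + 1 => H.f (H.tr (H.f^[j] z) (Y z y j))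

theorem Y_sep {z y y' : X} (hn : ∀ k : ℕ, H.f^[k] z ≠ H.c0) (hy : y ≠ z) (hy' : y' ≠ z)
    (h : z ∈ H.arc y y') (j : ℕ) : H.Y z y j ≠ H.f^[j] z ∧ H.Y z y' j ≠ H.f^[j] z ∧
      H.f^[j] z ∈ H.arc (H.Y z y j) (H.Y z y' j) := by
  induction j with
  | zero => exact ⟨hy, hy', h⟩
  | succ j ih =>
    obtain ⟨h1, h2, h3⟩ := ih
    obtain ⟨a, b, c⟩ := H.tr_sep (hn j) h1 h2 h3
    rw [Function.iterate_succ_apply']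
    exact ⟨b, c, a⟩

theorem Y_add {z y : X} {m : ℕ} (hz : H.f^[m] z = z) (j : ℕ) :
    H.Y z y (m + j) = H.Y z (H.Y z y m) j := by
  induction j with
  | zero => rfl
  | succ j ih =>
    show H.f (H.tr (H.f^[m+j] z) (H.Y z y (m+j))) = H.f (H.tr (H.f^[j] z) (H.Y z (H.Y z y m) j))
    rw [ih, Nat.add_comm m j, Function.iterate_add_apply, hz]

theorem Y_nohit {z y : X} (s l : ℕ)
    (h : ∀ i < l, H.f^[s+i] z ∈ H.arc (H.Y z y (s+i)) H.c0) :
    H.Y z y (s+l) = H.f^[l] (H.Y z y s) := by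
  induction l with
  | zero => rfl
  | succ l ih =>
    have h1 := ih (fun i hi => h i (by omega))
    show H.f (H.tr (H.f^[s+l] z) (H.Y z y (s+l))) = _
    rw [Function.iterate_succ_apply', ← h1, tr, if_pos (h l (by omega))]

theorem hit_lemma {z y : X} {m : ℕ} (hper : ExactPeriod H.f z m)
    (hn : ∀ k : ℕ, H.f^[k] z ≠ H.c0) (hc1 : H.c1 ≠ z) (hz1 : z ∈ H.arc H.c0 H.c1)
    (hk : ∀ k, H.f^[k] z ≠ z → z ∉ H.arc H.c0 (H.f^[k] z))
    (hit : ∃ j < m, H.f^[j] z ∉ H.arc (H.Y z y j) H.c0) :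
    z ∉ H.arc (H.Y z y m) H.c0 ∨ z ∉ H.arc (H.Y z y m) H.c1 := by
  classical
  obtain ⟨hm, hz, hmin⟩ := hper
  obtain ⟨j0, hj0, hh0⟩ := hit
  let P : ℕ → Prop := fun j => H.f^[j] z ∉ H.arc (H.Y z y j) H.c0
  obtain ⟨j, hjle, hPj, hjmax⟩ : ∃ j ≤ m - 1, P j ∧ ∀ i, j < i → i ≤ m - 1 → ¬ P i :=
    ⟨Nat.findGreatest P (m-1), Nat.findGreatest_le _,
      Nat.findGreatest_spec (P := P) (show j0 ≤ m - 1 by omega) hh0,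
      fun i h1 h2 => Nat.findGreatest_is_greatest h1 h2⟩
  have hY1 : H.Y z y (j+1) = H.c1 := by
    show H.f (H.tr (H.f^[j] z) (H.Y z y j)) = _
    rw [tr, if_neg hPj]; rfl
  rcases Nat.eq_or_lt_of_le hjle with he | hlt
  · right
    rw [show m = j + 1 by omega, hY1, H.arc_self]
    exact fun h => hc1 (Set.mem_singleton_iff.1 h).symm
  · left
    obtain ⟨l, hl⟩ : ∃ l, m = j + 1 + l := ⟨m - (j+1), by omega⟩
    have hnh : ∀ i < l, H.f^[j+1+i] z ∈ H.arc (H.Y z y (j+1+i)) H.c0 := by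
      intro i hi
      by_contra hc
      exact hjmax (j+1+i) (by omega) (by omega) hc
    have hYm : ∀ i ≤ l, H.Y z y (j+1+i) = H.f^[i] H.c1 := by
      intro i hi
      rw [H.Y_nohit (j+1) i (fun i' hi' => hnh i' (by omega)), hY1]
    have hne := hmin (j+1) (by omega) (by omega)
    have h1 : z ∈ H.arc (H.f^[j+1] z) H.c1 :=
      (H.arc_tri (b := H.f^[j+1] z) hz1).resolve_left (hk _ hne)
    have h2 := H.iter_arc h1 l (fun i hi => by
      have h3 := hnh i hi
      rw [H.arc_comm] at h3
      have h4 := H.not_back (hn _) h3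
      rw [hYm i hi.le] at h4
      rwa [← Function.iterate_add_apply, Nat.add_comm i])
    rw [← hYm l le_rfl, ← Function.iterate_add_apply, Nat.add_comm l, ← hl, hz] at h2
    have hne2 := hmin l (by omega) (by omega)
    have h3 := H.not_back hne2 h2
    intro h4
    rw [H.arc_comm] at h4
    rcases H.arc_tri (b := H.f^[l] z) h4 with h5 | h5
    · exact hk l hne2 h5
    · exact h3 h5

theorem third_arm {z a b : X} (hb : IsBranchPt z) (h1 : a ≠ z) (h2 : b ≠ z) :
    ∃ e, IsEndpoint e ∧ e ≠ z ∧ z ∈ H.arc e a ∧ z ∈ H.arc e b := by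
  have := H.t2
  have := H.compact
  have := H.conn
  obtain ⟨x1, x2, x3, n1, n2, n3, h12, h13, h23⟩ := (H.branch_iff z).1 hb
  have e12 : armTo z x1 ≠ armTo z x2 := fun h => (H.arm_eq_iff n1 n2).1 h h12
  have e13 : armTo z x1 ≠ armTo z x3 := fun h => (H.arm_eq_iff n1 n3).1 h h13
  have e23 : armTo z x2 ≠ armTo z x3 := fun h => (H.arm_eq_iff n2 n3).1 h h23
  obtain ⟨y, hy, ya, yb⟩ : ∃ y, y ≠ z ∧ armTo z y ≠ armTo z a ∧ armTo z y ≠ armTo z b := by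
    by_contra hcon
    push Not at hcon
    have g1 := hcon x1 n1
    have g2 := hcon x2 n2
    have g3 := hcon x3 n3
    clear hcon
    generalize armTo z x1 = A1 at *
    generalize armTo z x2 = A2 at *
    generalize armTo z x3 = A3 at *
    generalize armTo z a = A at *
    generalize armTo z b = B at *
    by_cases k1 : A1 = A
    · have k2 := g2 (fun h => e12 (k1.trans h.symm))
      have k3 := g3 (fun h => e13 (k1.trans h.symm))
      exact e23 (k2.trans k3.symm)
    · have k1' := g1 k1
      by_cases k2 : A2 = A
      · have k3 := g3 (fun h => e23 (k2.trans h.symm))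
        exact e13 (k1'.trans k3.symm)
      · exact e12 (k1'.trans (g2 k2).symm)
  obtain ⟨e, heC, he⟩ := arm_endpoint (H.arms_finite z) (C := armTo z y) ⟨y, hy, rfl⟩
  have hez : e ≠ z := fun h => connectedComponentIn_subset _ _ heC h
  have hee : armTo z y = armTo z e := connectedComponentIn_eq heC
  rw [hee] at ya yb
  refine ⟨e, he, hez, ?_, ?_⟩
  · by_contra h; exact ya ((H.arm_eq_iff hez h1).2 h)
  · by_contra h; exact yb ((H.arm_eq_iff hez h2).2 h)

theorem part2 (hp : ∃ N, H.f^[N] H.c1 = H.c0)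
    (z : X) (m : ℕ) (hper : ExactPeriod H.f z m)
    (hn : ∀ k : ℕ, H.f^[k] z ≠ H.c0) (hb : IsBranchPt z) (hch : H.IsCharacteristic z) :
      ∀ k : ℕ, 1 ≤ k → k ≤ m → H.itin z k = H.kneading k := by
  have hc0 : H.c0 ≠ z := (hn 0).symm
  have hc1 : H.c1 ≠ z := by
    rintro rfl
    obtain ⟨N, hN⟩ := hp
    exact hn N hN
  have harm : ∀ C ∈ arms z, ∀ x ∈ C, C = armTo z x := by
    rintro C ⟨y, hy, rfl⟩ x hx
    exact connectedComponentIn_eq hx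
  obtain ⟨Cv, Cz, hCv, hCz, hne, hv, h0, hrest⟩ := hch
  have eCz := harm _ hCz _ h0
  have hz1 : z ∈ H.arc H.c0 H.c1 := by
    by_contra h
    apply hne
    rw [harm _ hCv _ hv, eCz]
    exact ((H.arm_eq_iff hc0 hc1).2 h).symm
  have hk : ∀ k, H.f^[k] z ≠ z → z ∉ H.arc H.c0 (H.f^[k] z) := by
    intro k hkz
    have := hrest k hkz
    rw [eCz] at this
    exact (H.mem_arm_iff hc0 hkz).1 this
  have hhit := fun y => H.hit_lemma (y := y) hper hn hc1 hz1 hk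
  obtain ⟨hm, hz, hmin⟩ := hper
  by_cases hit : ∃ j < m, H.f^[j] z ∉ H.arc (H.Y z H.c1 j) H.c0
  · exfalso
    have r1 := hhit _ hit
    have r0 := hhit H.c0 ⟨0, by omega, by
      show z ∉ H.arc H.c0 H.c0
      rw [H.arc_self]; exact fun h => hc0 (Set.mem_singleton_iff.1 h).symm⟩
    have s01 := (H.Y_sep hn hc0 hc1 hz1 m).2.2
    rw [hz] at s01
    have sy : ∀ a b, z ∈ H.arc a b → z ∈ H.arc b a := fun a b h => H.arc_comm a b ▸ h
    have tri : ∀ a b c, z ∈ H.arc a c → z ∈ H.arc a b ∨ z ∈ H.arc b c :=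
      fun a b c h => H.arc_tri h
    let Q : X → Prop := fun y => y ≠ z ∧ z ∈ H.arc y H.c0 ∧ z ∈ H.arc y H.c1
    have hQ : ∀ y, Q y → Q (H.Y z y m) := by
      rintro y ⟨q1, q2, q3⟩
      obtain ⟨a1, -, a2⟩ := H.Y_sep hn q1 hc0 q2 m
      obtain ⟨-, -, a3⟩ := H.Y_sep hn q1 hc1 q3 m
      rw [hz] at a1 a2 a3
      generalize H.Y z y m = R at *
      generalize H.Y z H.c0 m = R0 at *
      generalize H.Y z H.c1 m = R1 at *
      refine ⟨a1, ?_, ?_⟩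
      · by_contra h
        have b0 : z ∉ H.arc R0 H.c1 := r0.resolve_left (fun h' =>
          (tri _ H.c0 _ a2).elim h (fun h'' => h' (sy _ _ h'')))
        have b1 : z ∉ H.arc R1 H.c1 := r1.resolve_left (fun h' =>
          (tri _ H.c0 _ a3).elim h (fun h'' => h' (sy _ _ h'')))
        exact (tri _ H.c1 _ s01).elim b0 (fun h'' => b1 (sy _ _ h''))
      · by_contra h
        have b0 : z ∉ H.arc R0 H.c0 := r0.resolve_right (fun h' =>
          (tri _ H.c1 _ a2).elim h (fun h'' => h' (sy _ _ h'')))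
        have b1 : z ∉ H.arc R1 H.c0 := r1.resolve_right (fun h' =>
          (tri _ H.c1 _ a3).elim h (fun h'' => h' (sy _ _ h'')))
        exact (tri _ H.c0 _ s01).elim b0 (fun h'' => b1 (sy _ _ h''))
    have hQn : ∀ y, Q y → ∀ j < m, H.f^[j] z ∈ H.arc (H.Y z y j) H.c0 := by
      intro y hy j hj
      by_contra hc
      obtain ⟨-, q2, q3⟩ := hQ y hy
      exact (hhit y ⟨j, hj, hc⟩).elim (fun h => h q2) (fun h => h q3)
    have hQa : ∀ j y, Q y → H.f^[j] z ∈ H.arc (H.Y z y j) H.c0 := by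
      intro j
      induction j using Nat.strong_induction_on with
      | _ j ih =>
        intro y hy
        by_cases hj : j < m
        · exact hQn y hy j hj
        · have := ih (j - m) (by omega) _ (hQ y hy)
          rw [← H.Y_add hz] at this
          have e : j = (j - m) + m := by omega
          have e2 : H.f^[j] z = H.f^[j - m] z := by
            conv_lhs => rw [e, Function.iterate_add_apply, hz]
          rw [e2]
          rwa [show m + (j - m) = j by omega] at this
    obtain ⟨e, he, q1, q2, q3⟩ := H.third_arm hb hc0 hc1
    obtain ⟨N, hN⟩ := H.endpoint_hits hp he
    have h1 := hQa N e ⟨q1, q2, q3⟩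
    have h2 := H.Y_nohit (z := z) (y := e) 0 N (fun i _ => hQa _ e ⟨q1, q2, q3⟩)
    rw [Nat.zero_add] at h2
    rw [h2, H.arc_comm] at h1
    exact H.not_c0_of_shadow (hn N) h1 hN
  · push Not at hit
    intro k hk1 hkm
    unfold kneading itin
    have h2 := H.Y_nohit (z := z) (y := H.c1) 0 (k-1) (fun i hi => hit _ (by omega))
    have h1 := hit (k-1) (by omega)
    rw [Nat.zero_add] at h2
    rw [h2, H.arc_comm] at h1
    exact H.sym_eq (H.not_back (hn _) h1)

end HubbardTree
/-- Corollary 3.7, "Itinerary of Characteristic Point".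
In a Hubbard tree with `*`-periodic kneading sequence, let `z` be a periodic point
of exact period `m` whose orbit avoids the critical point (if `z` is not a branch
point, assume its itinerary also has exact period `m`). If the first `m - 1`
entries of the itinerary of `z` agree with those of the kneading sequence, then `z`
is characteristic; conversely, if `z` is a characteristic branch point, then the
first `m` entries of its itinerary agree with the kneading sequence. -/
theorem itinerary_of_characteristic_point
    {X : Type*} [TopologicalSpace X] (H : HubbardTree X)
    (hν : ∃ n : ℕ, StarPeriodic H.kneading n)
    (z : X) (m : ℕ) (hper : ExactPeriod H.f z m)
    (hnotc0 : ∀ k : ℕ, H.f^[k] z ≠ H.c0)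
    (hitin : ¬ IsBranchPt z → ∀ m' : ℕ, 1 ≤ m' →
      (∀ k : ℕ, 1 ≤ k → H.itin z (k + m') = H.itin z k) → m ≤ m') :
    ((∀ k : ℕ, 1 ≤ k → k ≤ m - 1 → H.itin z k = H.kneading k) →
      H.IsCharacteristic z) ∧
    (IsBranchPt z → H.IsCharacteristic z →
      ∀ k : ℕ, 1 ≤ k → k ≤ m → H.itin z k = H.kneading k) := by
  obtain ⟨n, hν⟩ := hν
  have hp := H.c1_hits hν
  exact ⟨fun h => H.part1 hp z m hper hnotc0 hitin h, fun hb hc => H.part2 hp z m hper hnotc0 hb hc⟩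

end HubbardTrees
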